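/- There exists a constant C > 0 such that for every integer n ≥ 16 and every integer Ã with log₂ n ≤ Ã ≤ n/log₂ n, every binary tree of size n has a straight-line orthogonal planar grid drawing of some width W ≤ C·Ã and height H ≤ (n/Ã)·2^{C·log* Ã}. -/

import Mathlib

/-!
A binary tree is drawn after ordering the children at every node so that the right subtree is the
larger one. Following right children from a node gives a *chain*: a spine `x₁, x₂, …` together with
the left subtrees hanging from it (`BT.graft`). Two kinds of pictures are used.

* `TreeDraw t w h`: `t` fits into a `w × h` box with its root in a corner.
* `ChainDraw c W H`: a chain fits into a `W × H` box with its first spine node in a corner, and the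
  last spine node can be joined, along the row of that corner, to any drawing placed further to the
  right. So chains can be concatenated (`ChainDraw.append`), or bent back on themselves
  (`ChainDraw.fold`: the last three nodes of the chain serve for the turns, their subtrees
  occupying full-height boxes).

Write `ChainBound A B D` if every chain of size at most `B` fits into an `A × D` box. Then:

* Trees of size `n` fit into width `2A + 3 + log n` and height `O(D(n/B + 1))`
  (`TreeDraw.tall`). As long as the tree has more than `B` nodes, the maximal initial part of its
  spine of size at most `B` is cut off and drawn in `O(D)` rows (`TreeDraw.wind`), leaving two
  subtrees. They are drawn below each other; the one indented by one column is the smaller, so the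
  total indentation is at most `log n`, and each of the `O(n/B)` cuts costs `O(D)` rows.
* Given `ChainBound A' B' D'`, a chain whose subtrees have fewer than `2 ^ k` nodes fits into height
  `O(A' + k)` and width `O(D'(weight/B' + 1))` (`ChainDraw.lineup`): hang large subtrees turned by a
  right angle, and fold groups of weight about `B'` consisting of small ones.

Taking `A' = log A` in the second step shows that if `ChainBound` holds at `log A` with
`D' = O(log log A)` and `B' ≥ A' D' / E'`, then it holds at `A` with `D = O(log A)` and
`B ≥ A D / (c E')` for a constant `c` (`GoodParam.step`). Iterating `log* A` times gives
`B ≥ A log A / 2^{O(log* A)}`, and then the first step draws a tree of size `n` in width `O(A)` and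
height `O(log A · n / B) = (n / A) 2^{O(log* A)}` (`treeDraw_tradeoff`).

Drawings are handled on the lattice: an edge is the set of lattice points of its bounding box, and
`Valid` says recursively that subdrawings and edges meet only where they have to. Two axis-parallel
segments with integral endpoints that meet in a real point also meet in the points obtained from it
by rounding both coordinates down, or both up, which turns lattice planarity into planarity
(`gridDrawing_of_treeDraw`).
-/

open SimpleGraph

/-- A straight-line planar drawing of a graph `G`: an injective map of vertices to points of
`ℝ²` such that no vertex lies in the interior of (or on) a non-incident edge segment, and any
two distinct edge segments intersect exactly in the images of their common endpoints. -/
def IsStraightLineDrawing {V : Type} (G : SimpleGraph V) (f : V → ℝ × ℝ) : Prop :=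
  Function.Injective f ∧
  (∀ u v w : V, G.Adj u v → w ≠ u → w ≠ v → f w ∉ segment ℝ (f u) (f v)) ∧
  (∀ u v u' v' : V, G.Adj u v → G.Adj u' v' → s(u, v) ≠ s(u', v') →
    segment ℝ (f u) (f v) ∩ segment ℝ (f u') (f v') =
      f '' {w | (w = u ∨ w = v) ∧ (w = u' ∨ w = v')})

/-- A grid drawing of width `W` and height `H`: a straight-line planar drawing with all
vertices on integer grid points of `{1, …, W} × {1, …, H}`. -/
def IsGridDrawing {V : Type} (G : SimpleGraph V) (f : V → ℝ × ℝ) (W H : ℕ) : Prop :=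
  IsStraightLineDrawing G f ∧
  ∀ x : V, ∃ i j : ℤ, 1 ≤ i ∧ i ≤ (W : ℤ) ∧ 1 ≤ j ∧ j ≤ (H : ℤ) ∧ f x = ((i : ℝ), (j : ℝ))

/-- In a tree with distinguished root `r`, `u` is the parent of `v` iff `u` is a neighbor of
`v` lying on the path from `v` to `r` (equivalently, one step closer to the root). -/
def IsParent {V : Type} (G : SimpleGraph V) (r u v : V) : Prop :=
  G.Adj u v ∧ G.dist r u + 1 = G.dist r v

/-- A drawing is upward (w.r.t. root `r`) if every parent is drawn at a `y`-coordinate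
greater than or equal to that of each of its children. -/
def IsUpward {V : Type} (G : SimpleGraph V) (r : V) (f : V → ℝ × ℝ) : Prop :=
  ∀ u v : V, IsParent G r u v → (f v).2 ≤ (f u).2

/-- A drawing is orthogonal if every edge is drawn horizontally or vertically. -/
def IsOrthogonal {V : Type} (G : SimpleGraph V) (f : V → ℝ × ℝ) : Prop :=
  ∀ u v : V, G.Adj u v → (f u).1 = (f v).1 ∨ (f u).2 = (f v).2

/-- `logStar n`: the least `j` such that the `j`-fold iterated base-2 logarithm of `n`
is at most `1`. -/
noncomputable def logStar (n : ℕ) : ℕ := sInf {j : ℕ | (Real.logb 2)^[j] (n : ℝ) ≤ 1}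

/-! ### Binary trees and chains -/

/-- Finite binary trees with node labels in `α`; `nil` is the empty tree, so a node may lack
either child. -/
inductive BT (α : Type) : Type where
  | nil : BT α
  | node : α → BT α → BT α → BT α

namespace BT

variable {α β : Type}

/-- Number of nodes. -/
def size : BT α → ℕ
  | nil => 0
  | node _ l r => l.size + r.size + 1

/-- The tree is right-heavy: at every node the right subtree is at least as large as the left. -/
def RH : BT α → Prop
  | nil => True
  | node _ l r => l.size ≤ r.size ∧ l.RH ∧ r.RH

/-- Relabelling of nodes. -/
def map (f : α → β) : BT α → BT β
  | nil => nil
  | node a l r => node (f a) (l.map f) (r.map f)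

theorem map_map {γ : Type} (f : α → β) (g : β → γ) (t : BT α) :
    (t.map f).map g = t.map (g ∘ f) := by
  induction t with
  | nil => rfl
  | node a l r hl hr => simp [map, hl, hr]

theorem map_id' (t : BT α) : t.map (fun x => x) = t := by
  induction t with
  | nil => rfl
  | node a l r hl hr => simp [map, hl, hr]

/-- The label of the root, if the tree is nonempty. -/
def root : BT α → Option α
  | nil => none
  | node a _ _ => some a

/-- Hang the subtrees of a list along a spine continuing through right children, and put `t`
at the end of the spine. -/
def graft : List (α × BT α) → BT α → BT α
  | [], t => t
  | x :: c, t => node x.1 x.2 (graft c t)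

theorem graft_append (c c' : List (α × BT α)) (t : BT α) :
    graft (c ++ c') t = graft c (graft c' t) := by
  induction c with
  | nil => rfl
  | cons x c ih => simp [graft, ih]

/-- Number of nodes contributed by a spine together with its hanging subtrees. -/
def weight : List (α × BT α) → ℕ
  | [] => 0
  | x :: c => x.2.size + 1 + weight c

theorem weight_append (c c' : List (α × BT α)) : weight (c ++ c') = weight c + weight c' := by
  induction c with
  | nil => simp [weight]
  | cons x c ih => simp [weight, ih]; omega

end BT

/-! ### Lattice drawings of binary trees -/

/-- The integer grid. -/
abbrev Pt : Type := ℤ × ℤ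

/-- Lattice points of the bounding box of `p` and `q`; for axis-aligned `p`, `q` these are the
lattice points of the segment. -/
def seg (p q : Pt) : Set Pt :=
  {x | min p.1 q.1 ≤ x.1 ∧ x.1 ≤ max p.1 q.1 ∧ min p.2 q.2 ≤ x.2 ∧ x.2 ≤ max p.2 q.2}

/-- `p` and `q` lie on a common horizontal or vertical line. -/
def Aligned (p q : Pt) : Prop := p.1 = q.1 ∨ p.2 = q.2

section Drawing

open BT

variable {α : Type}

/-- Position of the root of a drawn tree. -/
def rpos (d : BT (α × Pt)) : Option Pt := d.root.map Prod.snd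

/-- Lattice points on the edge from a point to the root of a drawn tree; empty for the empty
tree. -/
def eseg (p : Pt) (d : BT (α × Pt)) : Set Pt := {x | ∃ q, rpos d = some q ∧ x ∈ seg p q}

/-- All lattice points covered by the vertices and edges of a drawn tree. -/
def foot : BT (α × Pt) → Set Pt
  | .nil => ∅
  | .node b l r => {b.2} ∪ foot l ∪ foot r ∪ eseg b.2 l ∪ eseg b.2 r

/-- The drawn tree is orthogonal and planar: at every node the two subdrawings and the two edges
towards them meet only where they have to. -/
def Valid : BT (α × Pt) → Prop
  | .nil => True
  | .node b l r =>
      Valid l ∧ Valid r ∧ (∀ q, rpos l = some q → Aligned b.2 q) ∧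
      (∀ q, rpos r = some q → Aligned b.2 q) ∧ b.2 ∉ foot l ∧ b.2 ∉ foot r ∧
      (∀ x ∈ foot l, x ∉ foot r) ∧
      (∀ x ∈ eseg b.2 l, x ∈ foot l → rpos l = some x) ∧
      (∀ x ∈ eseg b.2 r, x ∈ foot r → rpos r = some x) ∧
      (∀ x ∈ eseg b.2 l, x ∉ foot r) ∧ (∀ x ∈ eseg b.2 r, x ∉ foot l) ∧
      (∀ x ∈ eseg b.2 l, x ∈ eseg b.2 r → x = b.2)

/-- The root, if there is one, is drawn at `q`. -/
def RootAt (d : BT (α × Pt)) (q : Pt) : Prop := ∀ p, rpos d = some p → p = q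

/-- Change the positions of a drawn tree, keeping the labels. -/
def move (g : Pt → Pt) (d : BT (α × Pt)) : BT (α × Pt) := d.map (fun b => (b.1, g b.2))

/-- Injections of the grid respecting axis-aligned segments. -/
structure Rigid (g : Pt → Pt) : Prop where
  inj : Function.Injective g
  al : ∀ p q, Aligned p q → Aligned (g p) (g q)
  sg : ∀ p q x, x ∈ seg (g p) (g q) ↔ ∃ y ∈ seg p q, g y = x

theorem rpos_move (g : Pt → Pt) (d : BT (α × Pt)) : rpos (move g d) = (rpos d).map g := by
  cases d <;> simp [rpos, move, BT.map, BT.root]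

theorem move_labels (g : Pt → Pt) (d : BT (α × Pt)) :
    (move g d).map Prod.fst = d.map Prod.fst := by
  simp [move, BT.map_map, Function.comp_def]

theorem move_move (g k : Pt → Pt) (d : BT (α × Pt)) :
    move g (move k d) = move (fun x => g (k x)) d := by
  simp [move, BT.map_map, Function.comp_def]

theorem eseg_move {g : Pt → Pt} (hg : Rigid g) (p : Pt) (d : BT (α × Pt)) (x : Pt) :
    x ∈ eseg (g p) (move g d) ↔ ∃ y ∈ eseg p d, g y = x := by
  simp only [eseg, rpos_move, Set.mem_ofPred_eq, Option.map_eq_some_iff]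
  constructor
  · rintro ⟨_, ⟨q, hq, rfl⟩, hx⟩
    obtain ⟨y, hy, rfl⟩ := (hg.sg _ _ _).1 hx
    exact ⟨y, ⟨q, hq, hy⟩, rfl⟩
  · rintro ⟨y, ⟨q, hq, hy⟩, rfl⟩
    exact ⟨g q, ⟨q, hq, rfl⟩, (hg.sg _ _ _).2 ⟨y, hy, rfl⟩⟩

theorem foot_move {g : Pt → Pt} (hg : Rigid g) (d : BT (α × Pt)) (x : Pt) :
    x ∈ foot (move g d) ↔ ∃ y ∈ foot d, g y = x := by
  induction d generalizing x with
  | nil => simp [move, BT.map, foot]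
  | node b l r hl hr =>
    have e1 := eseg_move hg b.2 l x
    have e2 := eseg_move hg b.2 r x
    specialize hl x
    specialize hr x
    change x ∈ ({g b.2} ∪ foot (move g l) ∪ foot (move g r) ∪ eseg (g b.2) (move g l) ∪
      eseg (g b.2) (move g r)) ↔ _
    simp only [Set.mem_union, Set.mem_singleton_iff, e1, e2, hl, hr, foot]
    constructor
    · rintro ((((h | ⟨y, h, h'⟩) | ⟨y, h, h'⟩) | ⟨y, h, h'⟩) | ⟨y, h, h'⟩)
      · exact ⟨b.2, by simp, h.symm⟩
      all_goals exact ⟨y, by simp [h], h'⟩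
    · rintro ⟨y, ((((h | h) | h) | h) | h), h'⟩
      · subst h; simp [h']
      all_goals subst h'
      · exact Or.inl (Or.inl (Or.inl (Or.inr ⟨y, h, rfl⟩)))
      · exact Or.inl (Or.inl (Or.inr ⟨y, h, rfl⟩))
      · exact Or.inl (Or.inr ⟨y, h, rfl⟩)
      · exact Or.inr ⟨y, h, rfl⟩

theorem foot_move_mem {g : Pt → Pt} (hg : Rigid g) (d : BT (α × Pt)) (x : Pt) :
    g x ∈ foot (move g d) ↔ x ∈ foot d := by
  rw [foot_move hg]
  constructor
  · rintro ⟨y, hy, h⟩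
    exact hg.inj h ▸ hy
  · exact fun h => ⟨x, h, rfl⟩

theorem valid_move {g : Pt → Pt} (hg : Rigid g) (d : BT (α × Pt)) (hd : Valid d) :
    Valid (move g d) := by
  induction d with
  | nil => trivial
  | node b l r hl hr =>
    obtain ⟨v1, v2, a1, a2, n1, n2, dj, c1, c2, c3, c4, c5⟩ := hd
    change Valid (move g l) ∧ Valid (move g r) ∧ (∀ q, rpos (move g l) = some q → Aligned (g b.2) q) ∧
      (∀ q, rpos (move g r) = some q → Aligned (g b.2) q) ∧
      g b.2 ∉ foot (move g l) ∧ g b.2 ∉ foot (move g r) ∧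
      (∀ x ∈ foot (move g l), x ∉ foot (move g r)) ∧
      (∀ x ∈ eseg (g b.2) (move g l), x ∈ foot (move g l) → rpos (move g l) = some x) ∧
      (∀ x ∈ eseg (g b.2) (move g r), x ∈ foot (move g r) → rpos (move g r) = some x) ∧
      (∀ x ∈ eseg (g b.2) (move g l), x ∉ foot (move g r)) ∧
      (∀ x ∈ eseg (g b.2) (move g r), x ∉ foot (move g l)) ∧
      (∀ x ∈ eseg (g b.2) (move g l), x ∈ eseg (g b.2) (move g r) → x = g b.2)
    refine ⟨hl v1, hr v2, ?_, ?_, ?_, ?_, ?_, ?_, ?_, ?_, ?_, ?_⟩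
    · intro q hq
      rw [rpos_move, Option.map_eq_some_iff] at hq
      obtain ⟨q, hq, rfl⟩ := hq
      exact hg.al _ _ (a1 q hq)
    · intro q hq
      rw [rpos_move, Option.map_eq_some_iff] at hq
      obtain ⟨q, hq, rfl⟩ := hq
      exact hg.al _ _ (a2 q hq)
    · rwa [foot_move_mem hg]
    · rwa [foot_move_mem hg]
    · intro x hx
      obtain ⟨y, hy, rfl⟩ := (foot_move hg _ _).1 hx
      rw [foot_move_mem hg]; exact dj y hy
    · intro x hx
      obtain ⟨y, hy, rfl⟩ := (eseg_move hg _ _ _).1 hx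
      rw [foot_move_mem hg, rpos_move]
      intro h; rw [c1 y hy h]; rfl
    · intro x hx
      obtain ⟨y, hy, rfl⟩ := (eseg_move hg _ _ _).1 hx
      rw [foot_move_mem hg, rpos_move]
      intro h; rw [c2 y hy h]; rfl
    · intro x hx
      obtain ⟨y, hy, rfl⟩ := (eseg_move hg _ _ _).1 hx
      rw [foot_move_mem hg]; exact c3 y hy
    · intro x hx
      obtain ⟨y, hy, rfl⟩ := (eseg_move hg _ _ _).1 hx
      rw [foot_move_mem hg]; exact c4 y hy
    · intro x hx hx'
      obtain ⟨y, hy, rfl⟩ := (eseg_move hg _ _ _).1 hx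
      obtain ⟨z, hz, hzy⟩ := (eseg_move hg _ _ _).1 hx'
      have := hg.inj hzy
      subst this
      rw [c5 z hy hz]

theorem rootAt_move {g : Pt → Pt} {d : BT (α × Pt)} {q : Pt} (h : RootAt d q) :
    RootAt (move g d) (g q) := by
  intro p hp
  rw [rpos_move, Option.map_eq_some_iff] at hp
  obtain ⟨p, hp, rfl⟩ := hp
  rw [h p hp]

/-- Translations combined with axis reflections. -/
theorem rigid_refl (a b s s' : ℤ) (hs : s = 1 ∨ s = -1) (hs' : s' = 1 ∨ s' = -1) :
    Rigid (fun p => (a + s * p.1, b + s' * p.2)) := by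
  refine ⟨?_, ?_, ?_⟩
  · rintro ⟨x, y⟩ ⟨x', y'⟩ h
    simp only [Prod.mk.injEq] at h ⊢
    rcases hs with rfl | rfl <;> rcases hs' with rfl | rfl <;> omega
  · rintro ⟨x, y⟩ ⟨x', y'⟩ h
    simp only [Aligned] at h ⊢
    rcases h with rfl | rfl <;> simp
  · rintro ⟨x, y⟩ ⟨x', y'⟩ ⟨z, w⟩
    simp only [seg, Set.mem_ofPred_eq, Prod.mk.injEq, Prod.exists]
    constructor
    · intro h
      refine ⟨s * (z - a), s' * (w - b), ?_, ?_⟩ <;>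
        rcases hs with rfl | rfl <;> rcases hs' with rfl | rfl <;> omega
    · rintro ⟨u, v, h, rfl, rfl⟩
      rcases hs with rfl | rfl <;> rcases hs' with rfl | rfl <;> omega

theorem rigid_swap : Rigid Prod.swap := by
  refine ⟨Prod.swap_injective, ?_, ?_⟩
  · rintro ⟨x, y⟩ ⟨x', y'⟩ h
    exact h.symm
  · rintro ⟨x, y⟩ ⟨x', y'⟩ ⟨z, w⟩
    simp only [seg, Set.mem_ofPred_eq, Prod.exists, Prod.swap_prod_mk, Prod.mk.injEq]
    constructor
    · intro h
      exact ⟨w, z, by omega, rfl, rfl⟩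
    · rintro ⟨u, v, h, rfl, rfl⟩
      omega

theorem rootAt_nil (q : Pt) : RootAt (BT.nil : BT (α × Pt)) q := by
  intro p hp; simp [rpos, BT.root] at hp

theorem rootAt_node (a : α) (p : Pt) (l r : BT (α × Pt)) : RootAt (BT.node (a, p) l r) p := by
  intro q hq; simpa [rpos, BT.root, eq_comm] using hq

theorem rpos_of_mem_foot {d : BT (α × Pt)} {q x : Pt} (h : RootAt d q) (hx : x ∈ foot d) :
    rpos d = some q := by
  cases d with
  | nil => exact absurd hx (by simp [foot])
  | node b l r =>
    have : rpos (BT.node b l r) = some b.2 := rfl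
    rw [this, h _ this]

theorem eseg_sub {d : BT (α × Pt)} {a b c e x y : ℤ} (h : RootAt d (c, e))
    (hx : (x, y) ∈ eseg (a, b) d) :
    min a c ≤ x ∧ x ≤ max a c ∧ min b e ≤ y ∧ y ≤ max b e := by
  obtain ⟨z, hz, hx⟩ := hx
  rwa [h z hz] at hx

/-- Joining two drawings below a new root at `(a, b)`. The hypotheses are purely arithmetical:
`L` and `R` are regions known to contain the two drawings. -/
theorem valid_node {v : α} {a b c e c' e' : ℤ} {l r : BT (α × Pt)} (L R : ℤ → ℤ → Prop)
    (vl : Valid l) (vr : Valid r) (hl : RootAt l (c, e)) (hr : RootAt r (c', e'))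
    (hL : ∀ x y, (x, y) ∈ foot l → L x y) (hR : ∀ x y, (x, y) ∈ foot r → R x y)
    (al : a = c ∨ b = e) (ar : a = c' ∨ b = e')
    (nl : ¬ L a b) (nr : ¬ R a b) (dj : ∀ x y, L x y → ¬ R x y)
    (cl : ∀ x y, min a c ≤ x ∧ x ≤ max a c ∧ min b e ≤ y ∧ y ≤ max b e →
      (L x y → x = c ∧ y = e) ∧ ¬ R x y)
    (cr : ∀ x y, min a c' ≤ x ∧ x ≤ max a c' ∧ min b e' ≤ y ∧ y ≤ max b e' →
      (R x y → x = c' ∧ y = e') ∧ ¬ L x y)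
    (cc : ∀ x y, min a c ≤ x ∧ x ≤ max a c ∧ min b e ≤ y ∧ y ≤ max b e →
      min a c' ≤ x ∧ x ≤ max a c' ∧ min b e' ≤ y ∧ y ≤ max b e' → x = a ∧ y = b) :
    Valid (BT.node (v, (a, b)) l r) ∧
      ∀ x y, (x, y) ∈ foot (BT.node (v, (a, b)) l r) →
        (x = a ∧ y = b) ∨ (x, y) ∈ foot l ∨ (x, y) ∈ foot r ∨
          (min a c ≤ x ∧ x ≤ max a c ∧ min b e ≤ y ∧ y ≤ max b e) ∨
          (min a c' ≤ x ∧ x ≤ max a c' ∧ min b e' ≤ y ∧ y ≤ max b e') := by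
  refine ⟨⟨vl, vr, ?_, ?_, fun h => nl (hL _ _ h), fun h => nr (hR _ _ h),
    fun x h h' => dj _ _ (hL x.1 x.2 h) (hR x.1 x.2 h'), ?_, ?_, ?_, ?_, ?_⟩, ?_⟩
  · intro q hq; rw [hl q hq]; exact al
  · intro q hq; rw [hr q hq]; exact ar
  · rintro ⟨x, y⟩ hx hx'
    obtain ⟨rfl, rfl⟩ := (cl x y (eseg_sub hl hx)).1 (hL _ _ hx')
    exact rpos_of_mem_foot hl hx'
  · rintro ⟨x, y⟩ hx hx'
    obtain ⟨rfl, rfl⟩ := (cr x y (eseg_sub hr hx)).1 (hR _ _ hx')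
    exact rpos_of_mem_foot hr hx'
  · rintro ⟨x, y⟩ hx hx'; exact (cl x y (eseg_sub hl hx)).2 (hR _ _ hx')
  · rintro ⟨x, y⟩ hx hx'; exact (cr x y (eseg_sub hr hx)).2 (hL _ _ hx')
  · rintro ⟨x, y⟩ hx hx'
    obtain ⟨rfl, rfl⟩ := cc x y (eseg_sub hl hx) (eseg_sub hr hx')
    rfl
  · rintro x y ((((h | h) | h) | h) | h)
    · exact Or.inl (Prod.mk.inj h)
    · exact Or.inr (Or.inl h)
    · exact Or.inr (Or.inr (Or.inl h))
    · exact Or.inr (Or.inr (Or.inr (Or.inl (eseg_sub hl h))))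
    · exact Or.inr (Or.inr (Or.inr (Or.inr (eseg_sub hr h))))

/-- The tree has a drawing in a `w × h` box with its root in the corner `(0, 0)`. -/
def TreeDraw (t : BT α) (w h : ℕ) : Prop :=
  ∃ d : BT (α × Pt), d.map Prod.fst = t ∧ Valid d ∧ RootAt d (0, 0) ∧
    ∀ x y, (x, y) ∈ foot d → 0 ≤ x ∧ x < w ∧ 0 ≤ y ∧ y < h

/-- The spine `c` can be drawn from the corner `(0, 0)` in a `W × H` box and, along row `0`, be
connected to a terminal at `(X, 0)`, for every `X ≥ W`. The terminal is the root of an arbitrary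
drawing `d` avoiding the box and the row. -/
def ChainDraw (c : List (α × BT α)) (W H : ℕ) : Prop :=
  ∀ X : ℤ, W ≤ X → ∀ d : BT (α × Pt), Valid d → RootAt d (X, 0) →
    (∀ x y, (x, y) ∈ foot d →
      (0 ≤ x ∧ x < W ∧ 0 ≤ y ∧ y < H) ∨ (0 ≤ x ∧ x ≤ X ∧ y = 0) → x = X ∧ y = 0) →
    ∃ d' : BT (α × Pt), d'.map Prod.fst = graft c (d.map Prod.fst) ∧ Valid d' ∧
      RootAt d' (0, 0) ∧ ∀ x y, (x, y) ∈ foot d' →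
        (x, y) ∈ foot d ∨ (0 ≤ x ∧ x < W ∧ 0 ≤ y ∧ y < H) ∨ (0 ≤ x ∧ x ≤ X ∧ y = 0)

theorem TreeDraw.mono {t : BT α} {w h w' h' : ℕ} (H : TreeDraw t w h) (hw : w ≤ w')
    (hh : h ≤ h') : TreeDraw t w' h' := by
  obtain ⟨d, h1, h2, h3, h4⟩ := H
  exact ⟨d, h1, h2, h3, fun x y hx => by have := h4 x y hx; omega⟩

theorem ChainDraw.mono {c : List (α × BT α)} {w h w' h' : ℕ} (H : ChainDraw c w h) (hw : w ≤ w')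
    (hh : h ≤ h') : ChainDraw c w' h' := by
  intro X hX d vd rd fd
  obtain ⟨d', h1, h2, h3, h4⟩ := H X (by omega) d vd rd (fun x y hx hr => fd x y hx (by omega))
  refine ⟨d', h1, h2, h3, fun x y hx => ?_⟩
  rcases h4 x y hx with h | h
  · exact Or.inl h
  · right; omega

theorem TreeDraw.nil (w h : ℕ) : TreeDraw (BT.nil : BT α) w h :=
  ⟨.nil, rfl, trivial, rootAt_nil _, fun x y hx => absurd hx (by simp [foot])⟩

theorem TreeDraw.swap {t : BT α} {w h : ℕ} (H : TreeDraw t w h) : TreeDraw t h w := by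
  obtain ⟨d, h1, h2, h3, h4⟩ := H
  refine ⟨move Prod.swap d, by rw [move_labels, h1], valid_move rigid_swap d h2,
    rootAt_move h3, fun x y hx => ?_⟩
  obtain ⟨⟨u, v⟩, hy, he⟩ := (foot_move rigid_swap _ _).1 hx
  have := h4 u v hy
  simp only [Prod.swap_prod_mk, Prod.mk.injEq] at he
  omega

/-- Place a drawing with its root at `(a, b)`, the signs `s`, `s'` choosing the corner. -/
theorem TreeDraw.place {t : BT α} {w h : ℕ} (H : TreeDraw t w h) (a b s s' : ℤ)
    (hs : s = 1 ∨ s = -1) (hs' : s' = 1 ∨ s' = -1) :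
    ∃ d : BT (α × Pt), d.map Prod.fst = t ∧ Valid d ∧ RootAt d (a, b) ∧
      ∀ x y, (x, y) ∈ foot d →
        0 ≤ s * (x - a) ∧ s * (x - a) < w ∧ 0 ≤ s' * (y - b) ∧ s' * (y - b) < h := by
  obtain ⟨d, h1, h2, h3, h4⟩ := H
  have hg := rigid_refl a b s s' hs hs'
  refine ⟨move _ d, by rw [move_labels, h1], valid_move hg d h2, ?_, fun x y hx => ?_⟩
  · have := rootAt_move (g := fun p => (a + s * p.1, b + s' * p.2)) h3
    simpa using this
  · obtain ⟨⟨u, v⟩, hy, he⟩ := (foot_move hg _ _).1 hx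
    have := h4 u v hy
    simp only [Prod.mk.injEq] at he
    obtain ⟨rfl, rfl⟩ := he
    rcases hs with rfl | rfl <;> rcases hs' with rfl | rfl <;> omega

/-- A spine drawing placed with its first vertex at `(a, b)`. -/
theorem ChainDraw.place {c : List (α × BT α)} {W H : ℕ} (hc : ChainDraw c W H) (a b : ℤ)
    (X : ℤ) (hX : W ≤ X) (d : BT (α × Pt)) (vd : Valid d) (rd : RootAt d (a + X, b))
    (fd : ∀ x y, (x, y) ∈ foot d →
      (a ≤ x ∧ x < a + W ∧ b ≤ y ∧ y < b + H) ∨ (a ≤ x ∧ x ≤ a + X ∧ y = b) →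
        x = a + X ∧ y = b) :
    ∃ d' : BT (α × Pt), d'.map Prod.fst = graft c (d.map Prod.fst) ∧ Valid d' ∧
      RootAt d' (a, b) ∧ ∀ x y, (x, y) ∈ foot d' →
        (x, y) ∈ foot d ∨ (a ≤ x ∧ x < a + W ∧ b ≤ y ∧ y < b + H) ∨
          (a ≤ x ∧ x ≤ a + X ∧ y = b) := by
  have hg := rigid_refl (-a) (-b) 1 1 (Or.inl rfl) (Or.inl rfl)
  have hk := rigid_refl a b 1 1 (Or.inl rfl) (Or.inl rfl)
  obtain ⟨d', h1, h2, h3, h4⟩ := hc X hX (move _ d) (valid_move hg d vd)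
    (by have := rootAt_move (g := fun p => (-a + 1 * p.1, -b + 1 * p.2)) rd
        simpa using this)
    (fun x y hx hr => by
      obtain ⟨⟨u, v⟩, hy, he⟩ := (foot_move hg _ _).1 hx
      simp only [Prod.mk.injEq] at he
      have := fd u v hy (by omega)
      omega)
  refine ⟨move _ d', by rw [move_labels, h1, move_labels], valid_move hk d' h2, ?_, ?_⟩
  · have := rootAt_move (g := fun p => (a + 1 * p.1, b + 1 * p.2)) h3
    simpa using this
  · intro x y hx
    obtain ⟨⟨u, v⟩, hy, he⟩ := (foot_move hk _ _).1 hx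
    simp only [Prod.mk.injEq] at he
    rcases h4 u v hy with h | h
    · left
      obtain ⟨⟨u', v'⟩, hy', he'⟩ := (foot_move hg _ _).1 h
      simp only [Prod.mk.injEq] at he'
      have e1 : u' = x := by omega
      have e2 : v' = y := by omega
      rwa [e1, e2] at hy'
    · right; omega

/-- A spine drawing with the roles of rows and columns exchanged. -/
theorem ChainDraw.swap {c : List (α × BT α)} {W H : ℕ} (hc : ChainDraw c W H)
    (X : ℤ) (hX : W ≤ X) (d : BT (α × Pt)) (vd : Valid d) (rd : RootAt d (0, X))
    (fd : ∀ x y, (x, y) ∈ foot d →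
      (0 ≤ y ∧ y < W ∧ 0 ≤ x ∧ x < H) ∨ (0 ≤ y ∧ y ≤ X ∧ x = 0) → y = X ∧ x = 0) :
    ∃ d' : BT (α × Pt), d'.map Prod.fst = graft c (d.map Prod.fst) ∧ Valid d' ∧
      RootAt d' (0, 0) ∧ ∀ x y, (x, y) ∈ foot d' →
        (x, y) ∈ foot d ∨ (0 ≤ y ∧ y < W ∧ 0 ≤ x ∧ x < H) ∨ (0 ≤ y ∧ y ≤ X ∧ x = 0) := by
  obtain ⟨d', h1, h2, h3, h4⟩ := hc X hX (move Prod.swap d) (valid_move rigid_swap d vd)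
    (rootAt_move rd)
    (fun x y hx hr => by
      have hx' : (y, x) ∈ foot d := (foot_move_mem rigid_swap d (y, x)).1 hx
      exact fd y x hx' hr)
  refine ⟨move Prod.swap d', by rw [move_labels, h1, move_labels],
    valid_move rigid_swap d' h2, rootAt_move h3, ?_⟩
  intro x y hx
  have hx' : (y, x) ∈ foot d' := (foot_move_mem rigid_swap d' (y, x)).1 hx
  rcases h4 y x hx' with h | h
  · exact Or.inl ((foot_move_mem rigid_swap d (x, y)).1 h)
  · right; exact h

/-- The left subtree to the right of the root, the right subtree below. -/
theorem TreeDraw.hv {l r : BT α} {w₁ h₁ w₂ h₂ w : ℕ} (v : α) (hl : TreeDraw l w₁ h₁)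
    (hr : TreeDraw r w₂ h₂) (p1 : 1 ≤ w₁) (p2 : 1 ≤ h₁) (p4 : 1 ≤ h₂)
    (hw₁ : w₁ + 1 ≤ w) (hw₂ : w₂ ≤ w) : TreeDraw (.node v l r) w (h₁ + h₂) := by
  obtain ⟨dl, l1, l2, l3, l4⟩ := hl.place 1 0 1 1 (Or.inl rfl) (Or.inl rfl)
  obtain ⟨dr, r1, r2, r3, r4⟩ := hr.place 0 h₁ 1 1 (Or.inl rfl) (Or.inl rfl)
  obtain ⟨V, F⟩ := valid_node (v := v) (a := 0) (b := 0) _ _ l2 r2 l3 r3 l4 r4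
    (by omega) (by omega) (by omega) (by omega) (by intro x y; omega) (by intro x y; omega)
    (by intro x y; omega) (by intro x y; omega)
  refine ⟨_, by simp only [BT.map, l1, r1], V, rootAt_node _ _ _ _, fun x y hx => ?_⟩
  rcases F x y hx with h | h | h | h | h
  · omega
  · have := l4 x y h; omega
  · have := r4 x y h; omega
  · omega
  · omega

/-- One vertex with its subtree hanging below it. -/
theorem ChainDraw.single {l : BT α} {w h : ℕ} (v : α) (hl : TreeDraw l w h) (hw : 1 ≤ w)
    (hh : 1 ≤ h) : ChainDraw [(v, l)] w (h + 1) := by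
  intro X hX d vd rd fd
  obtain ⟨dl, l1, l2, l3, l4⟩ := hl.place 0 1 1 1 (Or.inl rfl) (Or.inl rfl)
  obtain ⟨V, F⟩ := valid_node (v := v) (a := 0) (b := 0) _
    (fun x y => (0 ≤ x ∧ x < w ∧ 0 ≤ y ∧ y < ((h + 1 : ℕ) : ℤ)) ∨ (0 ≤ x ∧ x ≤ X ∧ y = 0) →
      x = X ∧ y = 0) l2 vd l3 rd l4 fd
    (by omega) (by omega) (by omega) (by omega) (by intro x y; omega) (by intro x y; omega)
    (by intro x y; omega) (by intro x y; omega)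
  refine ⟨_, by simp only [BT.map, l1, graft], V, rootAt_node _ _ _ _, fun x y hx => ?_⟩
  rcases F x y hx with h | h | h | h | h
  · right; omega
  · have := l4 x y h; right; omega
  · exact Or.inl h
  · right; omega
  · right; omega

/-- Two spine drawings side by side. -/
theorem ChainDraw.append {c c' : List (α × BT α)} {W W' H : ℕ} (hc : ChainDraw c W H)
    (hc' : ChainDraw c' W' H) : ChainDraw (c ++ c') (W + W') H := by
  intro X hX d vd rd fd
  obtain ⟨d₁, a1, a2, a3, a4⟩ := hc'.place W 0 (X - W) (by omega) d vd
    (by rwa [show (W : ℤ) + (X - W) = X by ring])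
    (fun x y hx hr => by have := fd x y hx (by omega); omega)
  obtain ⟨d₂, b1, b2, b3, b4⟩ := hc W le_rfl d₁ a2 a3 (fun x y hx hr => by
    rcases a4 x y hx with h | h
    · have := fd x y h (by omega); omega
    · omega)
  refine ⟨d₂, by rw [b1, a1, graft_append], b2, b3, fun x y hx => ?_⟩
  rcases b4 x y hx with h | h
  · rcases a4 x y h with h | h
    · exact Or.inl h
    · right; omega
  · right; omega

/-- A fold: the spine `c` runs down column `0`, then the spine turns right at a vertex `u`, up at
`v` and right again at `z`. The subtrees of `u` and `v` hang below them, that of `z` lies to the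
left of `z`, between the two vertical runs. -/
theorem ChainDraw.fold {c : List (α × BT α)} {W H a₁ a₂ a₃ b : ℕ} (hc : ChainDraw c W H)
    (u v z : α) {tu tv tz : BT α} (hu : TreeDraw tu a₁ b) (hv : TreeDraw tv a₂ b)
    (hz : TreeDraw tz a₃ b) (hW : W ≤ b) (p1 : 1 ≤ a₁) (p2 : 1 ≤ a₂) (p3 : 1 ≤ a₃) (pb : 1 ≤ b) :
    ChainDraw (c ++ [(u, tu), (v, tv), (z, tz)]) (H + a₁ + a₃ + a₂) (2 * b + 1) := by
  intro X hX d vd rd fd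
  push_cast at hX
  obtain ⟨M, hM⟩ : ∃ M : ℤ, M = H + a₁ + a₃ := ⟨_, rfl⟩
  obtain ⟨dz, z1, z2, z3, z4⟩ := hz.place (M - 1) 0 (-1) 1 (Or.inr rfl) (Or.inl rfl)
  obtain ⟨dv, v1, v2, v3, v4⟩ := hv.place M (b + 1) 1 1 (Or.inl rfl) (Or.inl rfl)
  obtain ⟨du, u1, u2, u3, u4⟩ := hu.place 0 (b + 1) 1 1 (Or.inl rfl) (Or.inl rfl)
  have fd' : ∀ x y, (x, y) ∈ foot d →
      (0 ≤ x ∧ x < M + a₂ ∧ 0 ≤ y ∧ y < 2 * b + 1) ∨ (0 ≤ x ∧ x ≤ X ∧ y = 0) →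
        x = X ∧ y = 0 := fun x y hx hr => fd x y hx (by push_cast; omega)
  obtain ⟨Vz, Fz⟩ := valid_node (v := z) (a := M) (b := 0) _ _ z2 vd z3 rd z4 fd'
    (by omega) (by omega) (by omega) (by omega) (by intro x y; omega) (by intro x y; omega)
    (by intro x y; omega) (by intro x y; omega)
  have gz : ∀ x y, (x, y) ∈ foot (BT.node (z, (M, 0)) dz d) →
      (M - a₃ ≤ x ∧ x < M ∧ 0 ≤ y ∧ y < b) ∨ (M ≤ x ∧ x ≤ X ∧ y = 0) ∨
        ((0 ≤ x ∧ x < M + a₂ ∧ 0 ≤ y ∧ y < 2 * b + 1) ∨ (0 ≤ x ∧ x ≤ X ∧ y = 0) →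
        x = X ∧ y = 0) := by
    intro x y hx
    rcases Fz x y hx with h | h | h | h | h
    · omega
    · have := z4 x y h; omega
    · exact Or.inr (Or.inr (fd' x y h))
    · omega
    · omega
  obtain ⟨Vv, Fv⟩ := valid_node (v := v) (a := M) (b := b) _ _ v2 Vz v3
    (rootAt_node _ _ _ _) v4 gz
    (by omega) (by omega) (by omega) (by omega) (by intro x y; omega) (by intro x y; omega)
    (by intro x y; omega) (by intro x y; omega)
  have gv : ∀ x y, (x, y) ∈ foot (BT.node (v, (M, (b : ℤ))) dv (BT.node (z, (M, 0)) dz d)) →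
      (M ≤ x ∧ x < M + a₂ ∧ b ≤ y ∧ y < 2 * b + 1) ∨
      (M - a₃ ≤ x ∧ x < M ∧ 0 ≤ y ∧ y < b) ∨ (x = M ∧ 0 ≤ y ∧ y ≤ b) ∨ (M ≤ x ∧ x ≤ X ∧ y = 0) ∨
        ((0 ≤ x ∧ x < M + a₂ ∧ 0 ≤ y ∧ y < 2 * b + 1) ∨ (0 ≤ x ∧ x ≤ X ∧ y = 0) →
        x = X ∧ y = 0) := by
    intro x y hx
    rcases Fv x y hx with h | h | h | h | h
    · omega
    · have := v4 x y h; omega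
    · rcases gz x y h with h | h
      · exact Or.inr (Or.inl h)
      · exact Or.inr (Or.inr (Or.inr h))
    · omega
    · omega
  obtain ⟨Vu, Fu⟩ := valid_node (v := u) (a := 0) (b := b) _ _ u2 Vv u3
    (rootAt_node _ _ _ _) u4 gv
    (by omega) (by omega) (by omega) (by omega) (by intro x y; omega) (by intro x y; omega)
    (by intro x y; omega) (by intro x y; omega)
  obtain ⟨d', h1, h2, h3, h4⟩ := hc.swap b (by omega) _ Vu (rootAt_node _ _ _ _) (by
    intro x y hx hr
    rcases Fu x y hx with h | h | h | h | h
    · omega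
    · have := u4 x y h; omega
    · have := gv x y h; omega
    · omega
    · omega)
  refine ⟨d', ?_, h2, h3, fun x y hx => ?_⟩
  · rw [h1, graft_append]
    simp only [BT.map, u1, v1, z1, graft]
  push_cast
  rcases h4 x y hx with h | h
  · rcases Fu x y h with h | h | h | h | h
    · right; omega
    · have := u4 x y h; right; omega
    · rcases Fv x y h with h | h | h | h | h
      · right; omega
      · have := v4 x y h; right; omega
      · rcases Fz x y h with h | h | h | h | h
        · right; omega
        · have := z4 x y h; right; omega
        · exact Or.inl h
        · right; omega
        · right; omega
      · right; omega
      · right; omega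
    · right; omega
    · right; omega
  · right; omega

/-- Winding: below the root and its subtree, the spine `c` runs right to a vertex `y` in the last
column, whose subtree is drawn upwards, next to that of the root. The spine then goes down to
`u`, whose two subtrees are drawn mirrored: `t₁` to the left of `u`, `t₂` below. -/
theorem TreeDraw.wind {c : List (α × BT α)} {A D w₁ h₁ w₂ h₂ X : ℕ} (hc : ChainDraw c A D)
    (x₀ y₀ u : α) {lx ly t₁ t₂ : BT α} (hx : TreeDraw lx (A + 1) D) (hy : TreeDraw ly (A + 1) D)
    (ht₁ : TreeDraw t₁ w₁ h₁) (ht₂ : TreeDraw t₂ w₂ h₂) (pD : 1 ≤ D)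
    (q2 : 1 ≤ h₁) (q3 : 1 ≤ h₂) (hX : 2 * A + 2 ≤ X) (hw₁ : w₁ ≤ X)
    (hw₂ : w₂ ≤ X + 1) :
    TreeDraw (.node x₀ lx (graft c (.node y₀ ly (.node u t₁ t₂)))) (X + 1)
      (2 * D + (h₁ + h₂)) := by
  obtain ⟨d1, a1, a2, a3, a4⟩ := ht₁.place (X - 1) (2 * D) (-1) 1 (Or.inr rfl) (Or.inl rfl)
  obtain ⟨d2, b1, b2, b3, b4⟩ := ht₂.place X (2 * D + h₁) (-1) 1 (Or.inr rfl) (Or.inl rfl)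
  obtain ⟨Vu, Fu⟩ := valid_node (v := u) (a := X) (b := 2 * D) _ _ a2 b2 a3 b3 a4 b4
    (by omega) (by omega) (by omega) (by omega) (by intro x y; omega) (by intro x y; omega)
    (by intro x y; omega) (by intro x y; omega)
  obtain ⟨dy, y1, y2, y3, y4⟩ := hy.place X (D - 1) (-1) (-1) (Or.inr rfl) (Or.inr rfl)
  have gu : ∀ x y, (x, y) ∈ foot (BT.node (u, ((X : ℤ), (2 * D : ℤ))) d1 d2) →
      0 ≤ x ∧ x ≤ X ∧ 2 * D ≤ y ∧ y < 2 * D + (h₁ + h₂) := by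
    intro x y hx
    rcases Fu x y hx with h | h | h | h | h
    · omega
    · have := a4 x y h; omega
    · have := b4 x y h; omega
    · omega
    · omega
  obtain ⟨Vy, Fy⟩ := valid_node (v := y₀) (a := X) (b := D) _ _ y2 Vu y3
    (rootAt_node _ _ _ _) y4 gu
    (by omega) (by omega) (by omega) (by omega) (by intro x y; omega) (by intro x y; omega)
    (by intro x y; omega) (by intro x y; omega)
  have gy : ∀ x y, (x, y) ∈ foot (BT.node (y₀, ((X : ℤ), (D : ℤ))) dy
      (BT.node (u, ((X : ℤ), (2 * D : ℤ))) d1 d2)) →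
      (X - A ≤ x ∧ x ≤ X ∧ 0 ≤ y ∧ y ≤ D) ∨ (x = X ∧ D ≤ y ∧ y ≤ 2 * D) ∨
      (0 ≤ x ∧ x ≤ X ∧ 2 * D ≤ y ∧ y < 2 * D + (h₁ + h₂)) := by
    intro x y hx
    rcases Fy x y hx with h | h | h | h | h
    · omega
    · have := y4 x y h; omega
    · have := gu x y h; omega
    · omega
    · omega
  have gy' : ∀ x y, (x, y) ∈ foot (BT.node (y₀, ((X : ℤ), (D : ℤ))) dy
      (BT.node (u, ((X : ℤ), (2 * D : ℤ))) d1 d2)) → y = D → x = X := by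
    intro x y hx
    rcases Fy x y hx with h | h | h | h | h
    · omega
    · have := y4 x y h; omega
    · have := gu x y h; omega
    · omega
    · omega
  obtain ⟨dc, c1, c2, c3, c4⟩ := hc.place 0 D X (by omega) _ Vy
    (by simpa using rootAt_node _ _ _ _)
    (by
      intro x y hx hr
      have := gy x y hx
      have := gy' x y hx
      omega)
  have gc : ∀ x y, (x, y) ∈ foot dc →
      (X - A ≤ x ∧ x ≤ X ∧ 0 ≤ y ∧ y ≤ D) ∨
      (0 ≤ x ∧ x ≤ X ∧ D ≤ y ∧ y < 2 * D + (h₁ + h₂)) := by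
    intro x y hx
    rcases c4 x y hx with h | h
    · have := gy x y h; omega
    · omega
  obtain ⟨dx, x1, x2, x3, x4⟩ := hx.place 1 0 1 1 (Or.inl rfl) (Or.inl rfl)
  obtain ⟨V, F⟩ := valid_node (v := x₀) (a := 0) (b := 0) _ _ x2 c2 x3 c3 x4 gc
    (by omega) (by omega) (by omega) (by omega) (by intro x y; omega) (by intro x y; omega)
    (by intro x y; omega) (by intro x y; omega)
  refine ⟨_, by simp only [BT.map, x1, c1, y1, a1, b1], V, rootAt_node _ _ _ _,
    fun x y hx => ?_⟩
  rcases F x y hx with h | h | h | h | h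
  · omega
  · have := x4 x y h; omega
  · have := gc x y h; omega
  · omega
  · omega

/-! ### Recursive bounds -/

/-- Every right-heavy chain of total size at most `B` can be drawn in an `A × D` box. -/
def ChainBound (α : Type) (A B D : ℕ) : Prop :=
  ∀ c : List (α × BT α), c ≠ [] → (∀ x ∈ c, x.2.RH) → weight c ≤ B → ChainDraw c A D

theorem size_graft (c : List (α × BT α)) (t : BT α) : (graft c t).size = weight c + t.size := by
  induction c with
  | nil => simp [graft, weight]
  | cons x c ih => simp [graft, weight, BT.size, ih]; omega

theorem exists_spine (t : BT α) (ht : t.RH) :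
    ∃ c : List (α × BT α), t = graft c .nil ∧ ∀ x ∈ c, x.2.RH := by
  induction t with
  | nil => exact ⟨[], rfl, by simp⟩
  | node a l r _ hr =>
    obtain ⟨c, h1, h2⟩ := hr ht.2.2
    refine ⟨(a, l) :: c, by simp [graft, ← h1], ?_⟩
    intro x hx
    rcases List.mem_cons.1 hx with rfl | hx
    · exact ht.2.1
    · exact h2 x hx

theorem TreeDraw.of_chain {A B D : ℕ} (hS : ChainBound α A B D) (hD : 1 ≤ D) (t : BT α) (ht : t.RH)
    (hB : t.size ≤ B) : TreeDraw t (A + 1) D := by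
  obtain ⟨c, rfl, hc⟩ := exists_spine t ht
  cases c with
  | nil => exact TreeDraw.nil _ _
  | cons x c =>
    have hw : weight (x :: c) ≤ B := by rw [size_graft] at hB; omega
    obtain ⟨d', h1, h2, h3, h4⟩ :=
      (hS _ (by simp) hc hw) A le_rfl .nil trivial (rootAt_nil _) (by simp [foot])
    refine ⟨d', h1, h2, h3, fun x y hx => ?_⟩
    rcases h4 x y hx with h | h
    · simp [foot] at h
    · push_cast; omega

/-- A right-heavy tree of size more than `B` has a spine prefix of weight at most `B`, ending at
a node `u` whose left subtree would push the weight beyond `B`. -/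
theorem exists_cut (B : ℕ) (t : BT α) (ht : t.RH) (hB : B < t.size) :
    ∃ (c : List (α × BT α)) (u : α) (l r : BT α), t = graft c (.node u l r) ∧ weight c ≤ B ∧
      B < weight c + l.size + 1 ∧ (∀ x ∈ c, x.2.RH) ∧ l.RH ∧ r.RH ∧ l.size ≤ r.size := by
  induction t generalizing B with
  | nil => simp [BT.size] at hB
  | node a l r _ hr =>
    obtain ⟨h0, h1, h2⟩ := ht
    by_cases hl : B < l.size + 1
    · exact ⟨[], a, l, r, rfl, by simp [weight], by simp [weight]; omega, by simp, h1, h2, h0⟩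
    · simp only [BT.size] at hB
      obtain ⟨c, u, l', r', e, k1, k2, k3, k4⟩ := hr (B - (l.size + 1)) h2 (by omega)
      refine ⟨(a, l) :: c, u, l', r', by simp [graft, ← e], by simp [weight]; omega,
        by simp [weight]; omega, ?_, k4⟩
      intro x hx
      rcases List.mem_cons.1 hx with rfl | hx
      · exact h1
      · exact k3 x hx

theorem mul_div_add {B : ℕ} (hB : 1 ≤ B) {x y : ℕ} (h : x + B ≤ y) :
    6 * x / B + 6 ≤ 6 * y / B := by
  rw [Nat.le_div_iff_mul_le hB, add_mul]
  have := Nat.div_mul_le_self (6 * x) B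
  omega

theorem six_le_div {B : ℕ} (hB : 1 ≤ B) {y : ℕ} (h : B < y) : 6 ≤ 6 * y / B := by
  rw [Nat.le_div_iff_mul_le hB]
  omega

theorem mul_div_super {B : ℕ} (hB : 1 ≤ B) {x y z : ℕ} (h : x + y ≤ z) :
    6 * x / B + 6 * y / B ≤ 6 * z / B := by
  rw [Nat.le_div_iff_mul_le hB, add_mul]
  have := Nat.div_mul_le_self (6 * x) B
  have := Nat.div_mul_le_self (6 * y) B
  omega

/-- Height multiplier in `TreeDraw.tall_aux`. -/
def tallCount (B n : ℕ) : ℕ := if n ≤ B then 1 else 6 * n / B - 2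

theorem tallCount_pos {B : ℕ} (hB : 1 ≤ B) (n : ℕ) : 1 ≤ tallCount B n := by
  unfold tallCount
  split_ifs with h
  · rfl
  · have := six_le_div hB (y := n) (by omega)
    generalize 6 * n / B = a at *
    omega

theorem tallCount_add {B : ℕ} (hB : 1 ≤ B) {x y n : ℕ} (hxy : x ≤ y) (h1 : x + y + 1 ≤ n)
    (h2 : y + B < n) : tallCount B x + tallCount B y + 2 ≤ tallCount B n := by
  have e1 := six_le_div hB (y := n) (by omega)
  have e2 := mul_div_add hB h2.le
  have e3 := mul_div_super hB (x := x) (y := y) (z := n) (by omega)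
  have e4 : B < x → 6 ≤ 6 * x / B := six_le_div hB
  have e5 : B < y → 6 ≤ 6 * y / B := six_le_div hB
  unfold tallCount
  generalize 6 * n / B = a at *
  generalize 6 * x / B = b at *
  generalize 6 * y / B = c at *
  split_ifs <;> omega

/-- Chains of size `B` are cut off the tree repeatedly. Each cut costs height `2 * D`, by
`TreeDraw.wind`, and only the smaller of the two remaining subtrees, which has less than half of
the nodes, is pushed one unit to the right. -/
theorem TreeDraw.tall_aux {A B D : ℕ} (hS : ChainBound α A B D) (hA : 1 ≤ A) (hB : 1 ≤ B)
    (hD : 1 ≤ D) (m : ℕ) : ∀ (t : BT α) (k : ℕ), t.size ≤ m → t.RH → t.size < 2 ^ k →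
      TreeDraw t (2 * A + 3 + k) (D * tallCount B t.size) := by
  induction m with
  | zero =>
    intro t k h _ _
    cases t with
    | nil => exact TreeDraw.nil _ _
    | node => simp [BT.size] at h
  | succ m ih =>
    intro t k hm ht hk
    by_cases hBt : t.size ≤ B
    · refine (TreeDraw.of_chain hS hD t ht hBt).mono (by omega) ?_
      simp [tallCount, hBt]
    obtain ⟨c, u, l, r, rfl, hc, hu, hcR, hl, hr, hlr⟩ := exists_cut B t ht (by omega)
    have hsz := size_graft c (.node u l r)
    simp only [BT.size] at hsz
    have hk0 : k ≠ 0 := by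
      rintro rfl
      omega
    obtain ⟨k, rfl⟩ := Nat.exists_eq_succ_of_ne_zero hk0
    have hl' := ih l k (by omega) hl (by rw [pow_succ] at hk; omega)
    have hr' := ih r (k + 1) (by omega) hr (by omega)
    have hcnt := Nat.mul_le_mul_left D (tallCount_add hB (n := (graft c (.node u l r)).size) hlr
      (by omega) (by omega))
    have p1 := Nat.mul_pos hD (tallCount_pos hB l.size)
    have p2 := Nat.mul_pos hD (tallCount_pos hB r.size)
    rw [mul_add, mul_add] at hcnt
    have hsub : ∀ x ∈ c, TreeDraw x.2 (A + 1) D := fun x hx => by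
      refine TreeDraw.of_chain hS hD _ (hcR x hx) ?_
      obtain ⟨s, s', rfl⟩ := List.append_of_mem hx
      simp only [weight_append, weight] at hc
      omega
    have base := TreeDraw.hv (w := 2 * A + 3 + (k + 1)) u hl' hr' (by omega) p1 p2
      (by omega) (by omega)
    rcases c with _ | ⟨x, c⟩
    · exact base.mono le_rfl (by omega)
    have hx := hsub x (by simp)
    rcases List.eq_nil_or_concat' c with rfl | ⟨c, y, rfl⟩
    · exact (TreeDraw.hv (w := 2 * A + 3 + (k + 1)) x.1 hx base (by omega) hD (by omega)
        (by omega) (by omega)).mono le_rfl (by omega)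
    have hy := hsub y (by simp)
    have e : graft (x :: (c ++ [y])) (.node u l r) =
        .node x.1 x.2 (graft c (.node y.1 y.2 (.node u l r))) := by
      simp [graft, graft_append]
    rw [e] at hcnt ⊢
    by_cases hc0 : c = []
    · subst hc0
      have := TreeDraw.hv (w := 2 * A + 3 + (k + 1)) y.1 hy base (by omega) hD (by omega)
        (by omega) (by omega)
      exact (TreeDraw.hv (w := 2 * A + 3 + (k + 1)) x.1 hx this (by omega) hD (by omega)
        (by omega) (by omega)).mono le_rfl (by omega)
    · have hcc : ChainDraw c A D := by
        refine hS c hc0 (fun z hz => hcR z (by simp [hz])) ?_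
        simp only [weight, weight_append] at hc
        omega
      exact (TreeDraw.wind (X := 2 * A + 3 + k) hcc x.1 y.1 u hx hy hl' hr' hD p1 p2 (by omega)
        (by omega) (by omega)).mono (by omega) (by omega)

theorem TreeDraw.tall {A B D : ℕ} (hS : ChainBound α A B D) (hA : 1 ≤ A) (hB : 1 ≤ B)
    (hD : 1 ≤ D) (t : BT α) (k : ℕ) (ht : t.RH) (hk : t.size < 2 ^ k) :
    TreeDraw t (2 * A + 3 + k) (D * (6 * t.size / B + 1)) := by
  refine (TreeDraw.tall_aux hS hA hB hD _ t k le_rfl ht hk).mono le_rfl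
    (Nat.mul_le_mul_left _ ?_)
  unfold tallCount
  generalize 6 * t.size / B = a
  split_ifs <;> omega

theorem exists_group (B : ℕ) (R : List (α × BT α)) : ∀ G : List (α × BT α), G ≠ [] →
    weight G ≤ B → 3 ≤ R.length → ∃ (G' : List (α × BT α)) (u v z : α × BT α)
      (c' : List (α × BT α)), G ++ R = G' ++ [u, v, z] ++ c' ∧ G' ≠ [] ∧ weight G' ≤ B ∧
        (c' = [] ∨ B < weight G' + u.2.size + 1) := by
  induction R with
  | nil => intro G _ _ h; simp at h
  | cons u R ih =>
    intro G hG hB hR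
    rcases R with _ | ⟨v, _ | ⟨z, c'⟩⟩
    · simp at hR
    · simp at hR
    by_cases h : c' = [] ∨ B < weight G + u.2.size + 1
    · exact ⟨G, u, v, z, c', by simp, hG, hB, h⟩
    · rw [not_or] at h
      have hc : c'.length ≠ 0 := by simpa using h.1
      obtain ⟨G', u', v', z', c'', e, k⟩ := ih (G ++ [u]) (by simp)
        (by simp only [weight_append, weight]; omega) (by simp; omega)
      exact ⟨G', u', v', z', c'', by simpa using e, k⟩

/-- The spine is split into groups of weight about `B'`. Each group, with its last three subtrees
drawn tall, is folded by `ChainDraw.fold`, and the folded groups are lined up along row `0`; only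
a node whose own subtree exceeds `B'` is put there directly. -/
theorem ChainDraw.lineup {A' B' D' b : ℕ} (k : ℕ) (hS : ChainBound α A' B' D') (hA : 1 ≤ A')
    (hB : 1 ≤ B') (hD : 1 ≤ D') (hb : 2 * A' + 3 + k = b) (m : ℕ) :
    ∀ c : List (α × BT α), c.length ≤ m → c ≠ [] → (∀ x ∈ c, x.2.RH ∧ x.2.size < 2 ^ k) →
      ChainDraw c (D' * (5 + 11 * weight c / B')) (2 * b + 1) := by
  have key : ∀ x w, x * B' ≤ 11 * w → x ≤ 11 * w / B' := fun x w h =>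
    (Nat.le_div_iff_mul_le (by omega)).2 h
  have lo : ∀ s, 6 * s / B' * B' ≤ 6 * s := fun s => Nat.div_mul_le_self _ _
  have tall : ∀ x : α × BT α, (x.2.RH ∧ x.2.size < 2 ^ k) →
      TreeDraw x.2 (D' * (6 * x.2.size / B' + 1)) b := fun x hx => by
    subst hb
    exact (TreeDraw.tall hS hA hB hD x.2 k hx.1 hx.2).swap
  have pos : ∀ s, 1 ≤ D' * (s + 1) := fun s => Nat.mul_pos hD (Nat.succ_pos _)
  have one : ∀ x : α × BT α, (x.2.RH ∧ x.2.size < 2 ^ k) →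
      ChainDraw [x] (D' * (6 * x.2.size / B' + 1)) (2 * b + 1) := fun x hx =>
    (ChainDraw.single x.1 (tall x hx) (pos _) (by omega)).mono le_rfl (by omega)
  induction m with
  | zero =>
    intro c h0 h1
    exact absurd (List.length_eq_zero_iff.1 (Nat.le_zero.1 h0)) h1
  | succ m ih =>
    intro c hm hne hc
    rcases c with _ | ⟨x, c⟩
    · exact absurd rfl hne
    have hx := one x (hc x (by simp))
    by_cases hlen : c.length ≤ 2
    · rcases c with _ | ⟨y, _ | ⟨z, _ | ⟨w, c⟩⟩⟩
      · refine hx.mono (Nat.mul_le_mul_left _ ?_) le_rfl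
        have := key (6 * x.2.size / B') (weight [x])
          (by have := lo x.2.size; simp only [weight]; omega)
        omega
      · have hy := one y (hc y (by simp))
        refine (hx.append hy).mono ?_ le_rfl
        rw [← mul_add]
        refine Nat.mul_le_mul_left _ ?_
        have := key (6 * x.2.size / B' + 6 * y.2.size / B') (weight [x, y])
          (by have := lo x.2.size; have := lo y.2.size; simp only [weight, add_mul]; omega)
        omega
      · have hy := one y (hc y (by simp))
        have hz := one z (hc z (by simp))
        refine (hx.append (hy.append hz)).mono ?_ le_rfl
        rw [← mul_add, ← mul_add]
        refine Nat.mul_le_mul_left _ ?_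
        have := key (6 * x.2.size / B' + 6 * y.2.size / B' + 6 * z.2.size / B')
          (weight [x, y, z])
          (by
            have := lo x.2.size
            have := lo y.2.size
            have := lo z.2.size
            simp only [weight, add_mul]; omega)
        omega
      · simp at hlen
    by_cases hbig : B' < x.2.size + 1
    · have hr := ih c (by simpa using hm) (by rintro rfl; simp at hlen)
        (fun y hy => hc y (by simp [hy]))
      refine (hx.append hr).mono ?_ le_rfl
      rw [← mul_add]
      refine Nat.mul_le_mul_left _ ?_
      have := key (6 * x.2.size / B' + 1 + 11 * weight c / B') (weight (x :: c))
        (by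
          have := lo x.2.size
          have := Nat.div_mul_le_self (11 * weight c) B'
          simp only [weight, add_mul]; omega)
      omega
    · obtain ⟨G, u, v, z, c', e, g1, g2, g3⟩ := exists_group B' c [x] (by simp)
        (by simp only [weight]; omega) (by omega)
      have e' : x :: c = G ++ [u, v, z] ++ c' := e
      rw [e'] at hc ⊢
      have hG := hS G g1 (fun y hy => (hc y (by simp [hy])).1) g2
      have hf := ChainDraw.fold hG u.1 v.1 z.1 (tall u (hc u (by simp)))
        (tall v (hc v (by simp))) (tall z (hc z (by simp))) (by omega) (pos _) (pos _) (pos _)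
        (by omega)
      rw [show D' + D' * (6 * u.2.size / B' + 1) + D' * (6 * z.2.size / B' + 1) +
        D' * (6 * v.2.size / B' + 1) = D' * (4 + (6 * u.2.size / B' + 6 * v.2.size / B' +
          6 * z.2.size / B')) by ring] at hf
      have lu := lo u.2.size
      have lv := lo v.2.size
      have lz := lo z.2.size
      rcases c' with _ | ⟨y, c'⟩
      · rw [List.append_nil]
        refine hf.mono (Nat.mul_le_mul_left _ ?_) le_rfl
        have := key (6 * u.2.size / B' + 6 * v.2.size / B' + 6 * z.2.size / B')
          (weight (G ++ [u, v, z])) (by simp only [weight, weight_append, add_mul]; omega)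
        omega
      · have hlc : (y :: c').length ≤ m := by
          have := congrArg List.length e'
          simp only [List.length_cons, List.length_append] at this hm ⊢
          omega
        have hr := ih (y :: c') hlc (by simp) (fun w hw => hc w (by simp [List.mem_cons.1 hw]))
        refine (hf.append hr).mono ?_ le_rfl
        rw [← mul_add]
        refine Nat.mul_le_mul_left _ ?_
        have g3' : B' < weight G + u.2.size + 1 := by simpa using g3
        have := key (4 + (6 * u.2.size / B' + 6 * v.2.size / B' + 6 * z.2.size / B') +
            11 * weight (y :: c') / B') (weight (G ++ [u, v, z] ++ (y :: c')))
          (by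
            have := Nat.div_mul_le_self (11 * weight (y :: c')) B'
            rw [weight_append, weight_append]
            generalize weight (y :: c') = r at *
            simp only [weight, add_mul]; omega)
        omega

theorem ChainBound.step {A A' B B' D' : ℕ} (k : ℕ) (hS : ChainBound α A' B' D') (hA : 1 ≤ A')
    (hB : 1 ≤ B') (hD : 1 ≤ D') (hk : B < 2 ^ k) (hA' : D' * (5 + 11 * B / B') ≤ A) :
    ChainBound α A B (2 * (2 * A' + 3 + k) + 1) := by
  intro c hne hR hw
  refine (ChainDraw.lineup k hS hA hB hD rfl c.length c le_rfl hne
    (fun x hx => ⟨hR x hx, ?_⟩)).mono (le_trans (Nat.mul_le_mul_left _ ?_) hA') le_rfl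
  · obtain ⟨s, s', rfl⟩ := List.append_of_mem hx
    simp only [weight_append, weight] at hw
    omega
  · have : 11 * weight c / B' ≤ 11 * B / B' := Nat.div_le_div_right (by omega)
    omega

theorem ChainBound.one (A D : ℕ) (hA : 1 ≤ A) (hD : 2 ≤ D) : ChainBound α A 1 D := by
  intro c hne _ hw
  rcases c with _ | ⟨⟨v, t⟩, _ | ⟨y, c⟩⟩
  · exact absurd rfl hne
  · cases t with
    | nil => exact (ChainDraw.single v (TreeDraw.nil 1 1) le_rfl le_rfl).mono hA hD
    | node a l r => simp [weight, BT.size] at hw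
  · simp only [weight] at hw
    omega

/-- Chains of size about `A * log A / E` can be drawn in width `A` and height `O(log A)`. -/
def GoodParam (α : Type) (A E : ℕ) : Prop :=
  ∃ B, 1 ≤ B ∧ ChainBound α A B (19 * Nat.log 2 A) ∧ A * Nat.log 2 A ≤ E * B ∧ B ≤ A ^ 2

theorem GoodParam.base {A : ℕ} (h2 : 2 ≤ A) (hA : A < 2 ^ 13) (E : ℕ) (hE : 2 ^ 17 ≤ E) :
    GoodParam α A E := by
  have h1 : 1 ≤ Nat.log 2 A := Nat.log_pos (by norm_num) h2
  have h3 : Nat.log 2 A < 13 := Nat.log_lt_of_lt_pow (by omega) hA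
  refine ⟨1, le_rfl, ChainBound.one _ _ (by omega) (by omega), ?_, Nat.one_le_pow _ _ (by omega)⟩
  calc A * Nat.log 2 A ≤ 2 ^ 13 * 12 := Nat.mul_le_mul (by omega) (by omega)
    _ ≤ E * 1 := by omega

theorem linear_le_two_pow {h : ℕ} (hh : 13 ≤ h) : 418 * h ≤ 2 ^ h := by
  induction h, hh using Nat.le_induction with
  | base => norm_num
  | succ h hh ih => rw [pow_succ]; omega

theorem sq_le_two_pow {h : ℕ} (hh : 13 ≤ h) : h ^ 2 ≤ 2 ^ h := by
  induction h, hh using Nat.le_induction with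
  | base => norm_num
  | succ h hh ih => rw [pow_succ 2]; nlinarith

/-- Passing from `log A` to `A` costs a constant factor. -/
theorem GoodParam.step {A E' : ℕ} (hA : 2 ^ 13 ≤ A) (h : GoodParam α (Nat.log 2 A) E') :
    GoodParam α A (836 * E') := by
  have hA0 : A ≠ 0 := by omega
  obtain ⟨B', b1, bS, bE, bB⟩ := h
  have hh : 13 ≤ Nat.log 2 A := (Nat.le_log_iff_pow_le (by norm_num) hA0).2 hA
  have hp : 2 ^ Nat.log 2 A ≤ A := Nat.pow_log_le_self 2 hA0
  have hq : A < 2 ^ (Nat.log 2 A + 1) := Nat.lt_pow_succ_log_self (by norm_num) A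
  unfold GoodParam
  generalize Nat.log 2 A = h at *
  have hl : Nat.log 2 h ≤ h := Nat.log_le_self 2 h
  have hl1 : 1 ≤ Nat.log 2 h := Nat.log_pos (by norm_num) (by omega)
  generalize Nat.log 2 h = l at *
  have e1 := linear_le_two_pow hh
  have e2 := sq_le_two_pow hh
  have e3 : 22 * (19 * l) ≤ A := by omega
  have hpos : 0 < 22 * (19 * l) := by omega
  have hAB : A * 1 ≤ A * B' := Nat.mul_le_mul_left _ b1
  have hB1 : 1 ≤ A * B' / (22 * (19 * l)) := (Nat.le_div_iff_mul_le hpos).2 (by omega)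
  have hBu : A * B' / (22 * (19 * l)) * (22 * (19 * l)) ≤ A * B' := Nat.div_mul_le_self _ _
  have hBl : A * B' < (A * B' / (22 * (19 * l)) + 1) * (22 * (19 * l)) :=
    (Nat.div_lt_iff_lt_mul hpos).1 (Nat.lt_succ_self _)
  generalize A * B' / (22 * (19 * l)) = B at *
  have hB2 : B ≤ A ^ 2 := by
    calc B ≤ B * (22 * (19 * l)) := Nat.le_mul_of_pos_right _ hpos
      _ ≤ A * B' := hBu
      _ ≤ A * A := Nat.mul_le_mul_left _ (by omega)
      _ = A ^ 2 := by ring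
  refine ⟨B, hB1, ?_, ?_, hB2⟩
  · have hk : B < 2 ^ (2 * h + 2) := by
      calc B ≤ A ^ 2 := hB2
        _ < (2 ^ (h + 1)) ^ 2 := Nat.pow_lt_pow_left hq (by norm_num)
        _ = 2 ^ (2 * h + 2) := by rw [← pow_mul]; congr 1; ring
    have hw : 19 * l * (5 + 11 * B / B') ≤ A := by
      have h1 : 11 * B / B' * (2 * (19 * l)) ≤ A := by
        have h2 : 11 * B / B' * B' ≤ 11 * B := Nat.div_mul_le_self _ _
        refine Nat.le_of_mul_le_mul_right (c := B') ?_ (by omega)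
        calc 11 * B / B' * (2 * (19 * l)) * B' = 11 * B / B' * B' * (2 * (19 * l)) := by ring
          _ ≤ 11 * B * (2 * (19 * l)) := Nat.mul_le_mul_right _ h2
          _ = B * (22 * (19 * l)) := by ring
          _ ≤ A * B' := hBu
      generalize 11 * B / B' = q at *
      nlinarith
    have hs := ChainBound.step (2 * h + 2) bS (by omega) b1 (by omega) hk hw
    intro c c1 c2 c3
    exact (hs c c1 c2 c3).mono le_rfl (by omega)
  · have h1 : A * B' ≤ 836 * l * B := by nlinarith
    refine Nat.le_of_mul_le_mul_right (c := l) ?_ (by omega)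
    calc A * h * l = A * (h * l) := by ring
      _ ≤ A * (E' * B') := Nat.mul_le_mul_left _ bE
      _ = E' * (A * B') := by ring
      _ ≤ E' * (836 * l * B) := Nat.mul_le_mul_left _ h1
      _ = 836 * E' * B * l := by ring

theorem GoodParam.iterate (s : ℕ) : ∀ A : ℕ, 2 ≤ A → (Nat.log 2)^[s] A ≤ 1 →
    GoodParam α A (2 ^ 17 * 836 ^ s) := by
  induction s with
  | zero => intro A h1 h2; exact absurd h2 (by simp; omega)
  | succ s ih =>
    intro A h1 h2
    by_cases hA : A < 2 ^ 13
    · exact GoodParam.base h1 hA _ (Nat.le_mul_of_pos_right _ (by positivity))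
    · have hh : 13 ≤ Nat.log 2 A :=
        (Nat.le_log_iff_pow_le (by norm_num) (by omega)).2 (by omega)
      have := (ih (Nat.log 2 A) (by omega) (by simpa using h2)).step (by omega)
      rwa [show 836 * (2 ^ 17 * 836 ^ s) = 2 ^ 17 * 836 ^ (s + 1) by ring] at this

theorem natLog_iterate_le_one (s : ℕ) : ∀ (a : ℕ) (x : ℝ), (a : ℝ) ≤ x →
    (Real.logb 2)^[s] x ≤ 1 → (Nat.log 2)^[s] a ≤ 1 := by
  have small : ∀ s a : ℕ, a ≤ 1 → (Nat.log 2)^[s] a ≤ 1 := by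
    intro s
    induction s with
    | zero => intro a h; simpa using h
    | succ s ih =>
      intro a h
      refine ih _ ?_
      rw [Nat.log_of_lt (by omega)]
      omega
  induction s with
  | zero =>
    intro a x h1 h2
    exact_mod_cast h1.trans h2
  | succ s ih =>
    intro a x h1 h2
    by_cases ha : a ≤ 1
    · exact small _ _ ha
    · refine ih (Nat.log 2 a) (Real.logb 2 x) ?_ h2
      have h0 : (0 : ℝ) < a := by exact_mod_cast (by omega : 0 < a)
      have := Real.natLog_le_logb a 2
      push_cast at this
      exact this.trans (Real.logb_le_logb_of_le (by norm_num) h0 h1)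

theorem logb_two_le {x : ℝ} (hx : 2 ≤ x) : Real.logb 2 x ≤ x - 1 := by
  have h1 := Real.log_two_gt_d9
  rw [Real.logb, div_le_iff₀ (by linarith)]
  have h2 : Real.log x = Real.log (x / 2) + Real.log 2 := by
    rw [Real.log_div (by linarith) (by norm_num)]
    ring
  have h3 := Real.log_le_sub_one_of_pos (x := x / 2) (by linarith)
  nlinarith

theorem exists_iterate_logb (N : ℕ) : ∀ x : ℝ, x ≤ N → ∃ j, (Real.logb 2)^[j] x ≤ 1 := by
  induction N with
  | zero =>
    intro x h
    push_cast at h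
    exact ⟨0, by simpa using h.trans zero_le_one⟩
  | succ N ih =>
    intro x h
    by_cases h1 : x ≤ 1
    · exact ⟨0, by simpa using h1⟩
    by_cases h2 : x ≤ 2
    · refine ⟨1, ?_⟩
      have := Real.logb_le_logb_of_le (b := 2) (by norm_num) (by linarith) h2
      simpa using this
    · push_cast at h
      obtain ⟨j, hj⟩ := ih (Real.logb 2 x) (by linarith [logb_two_le (x := x) (by linarith)])
      exact ⟨j + 1, hj⟩

theorem logStar_spec (n : ℕ) : (Real.logb 2)^[logStar n] (n : ℝ) ≤ 1 :=
  Nat.sInf_mem (s := {j : ℕ | (Real.logb 2)^[j] (n : ℝ) ≤ 1}) (exists_iterate_logb n n le_rfl)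

/-- The width-height tradeoff for right-heavy binary trees. -/
theorem treeDraw_tradeoff (n A : ℕ) (hn : 16 ≤ n) (h1 : Real.logb 2 n ≤ (A : ℝ))
    (h2 : (A : ℝ) ≤ (n : ℝ) / Real.logb 2 n) (t : BT α) (ht : t.RH) (hs : t.size = n) :
    ∃ W H : ℕ, TreeDraw t W H ∧ (W : ℝ) ≤ 35 * A ∧
      (H : ℝ) ≤ ((n : ℝ) / A) * (2 : ℝ) ^ ((35 : ℝ) * (logStar A : ℝ)) := by
  have hn' : (16 : ℝ) ≤ n := by exact_mod_cast hn
  have l4 : (4 : ℝ) ≤ Real.logb 2 n := by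
    rw [Real.le_logb_iff_rpow_le (by norm_num) (by linarith)]
    norm_num
    exact hn
  have hA4 : 4 ≤ A := by exact_mod_cast l4.trans h1
  have hA0 : (0 : ℝ) < A := by exact_mod_cast (by omega : 0 < A)
  have hAn : (A : ℝ) * Real.logb 2 n ≤ n := by rwa [le_div_iff₀ (by linarith)] at h2
  have hAn' : (A : ℝ) ≤ n := by nlinarith
  have hLn : (Nat.log 2 n : ℝ) ≤ Real.logb 2 n := by
    have := Real.natLog_le_logb n 2
    push_cast at this
    exact this
  have hLA : (Nat.log 2 A : ℝ) ≤ Real.logb 2 n := by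
    have := Real.natLog_le_logb A 2
    push_cast at this
    exact this.trans (Real.logb_le_logb_of_le (by norm_num) hA0 hAn')
  have hkA : Nat.log 2 n ≤ A := by exact_mod_cast hLn.trans h1
  have hs1 : 1 ≤ logStar A := by
    by_contra h
    have h0 := logStar_spec A
    rw [show logStar A = 0 by omega] at h0
    simp only [Function.iterate_zero, id_eq] at h0
    have : (4 : ℝ) ≤ A := by exact_mod_cast hA4
    linarith
  obtain ⟨B, b1, bS, bE, _⟩ := GoodParam.iterate (α := α) (logStar A) A (by omega)
    (natLog_iterate_le_one _ _ _ le_rfl (logStar_spec A))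
  have hl1 : 1 ≤ Nat.log 2 A := Nat.log_pos (by norm_num) (by omega)
  have hT := TreeDraw.tall bS (by omega) b1 (by omega) t (Nat.log 2 n + 1) ht
    (by rw [hs]; exact Nat.lt_pow_succ_log_self (by norm_num) n)
  rw [hs] at hT
  refine ⟨_, _, hT, ?_, ?_⟩
  · have : 2 * A + 3 + (Nat.log 2 n + 1) ≤ 35 * A := by omega
    exact_mod_cast this
  · generalize logStar A = s at *
    generalize Nat.log 2 A = L at *
    have hdiv : ((6 * n / B : ℕ) : ℝ) * B ≤ 6 * n := by
      exact_mod_cast Nat.div_mul_le_self (6 * n) B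
    have hE : 133 * (2 ^ 17 * 836 ^ s) ≤ 2 ^ (35 * s) := by
      calc 133 * (2 ^ 17 * 836 ^ s) ≤ 2 ^ 8 * (2 ^ 17 * (2 ^ 10) ^ s) := by
            refine Nat.mul_le_mul (by norm_num) (Nat.mul_le_mul_left _ ?_)
            exact Nat.pow_le_pow_left (by norm_num) s
        _ = 2 ^ (25 + 10 * s) := by rw [← pow_mul]; ring
        _ ≤ 2 ^ (35 * s) := Nat.pow_le_pow_right (by norm_num) (by omega)
    have hpow : (2 : ℝ) ^ ((35 : ℝ) * (s : ℝ)) = ((2 ^ (35 * s) : ℕ) : ℝ) := by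
      rw [show (35 : ℝ) * (s : ℝ) = ((35 * s : ℕ) : ℝ) by push_cast; ring, Real.rpow_natCast]
      push_cast
      rfl
    have hE1 : 1 ≤ 2 ^ 17 * 836 ^ s := Nat.one_le_iff_ne_zero.2 (by positivity)
    have hE' : ((133 * (2 ^ 17 * 836 ^ s) : ℕ) : ℝ) ≤ ((2 ^ (35 * s) : ℕ) : ℝ) := by
      exact_mod_cast hE
    generalize 2 ^ 17 * 836 ^ s = E at *
    rw [hpow]
    generalize 2 ^ (35 * s) = K at *
    push_cast at hE'
    rw [div_mul_eq_mul_div, le_div_iff₀ hA0]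
    have hbE : (A : ℝ) * L ≤ E * B := by exact_mod_cast bE
    have hB0 : (0 : ℝ) < B := by exact_mod_cast b1
    have hE1' : (1 : ℝ) ≤ E := by exact_mod_cast hE1
    push_cast
    generalize ((6 * n / B : ℕ) : ℝ) = q at *
    have hq : q * L * A ≤ 6 * n * E := by
      refine le_of_mul_le_mul_right ?_ hB0
      have hL0 : (0 : ℝ) ≤ A * L := by positivity
      calc q * L * A * B = (q * B) * (A * L) := by ring
        _ ≤ (6 * n) * (E * B) := mul_le_mul hdiv hbE hL0 (by positivity)
        _ = 6 * n * E * B := by ring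
    have hLA' : (L : ℝ) * A ≤ n := by nlinarith
    calc 19 * (L : ℝ) * (q + 1) * A = 19 * (q * L * A) + 19 * (L * A) := by ring
      _ ≤ 19 * (6 * n * E) + 19 * (n * E) := by nlinarith
      _ = n * (133 * E) := by ring
      _ ≤ n * K := by nlinarith

end Drawing

/-! ### From lattice drawings to real drawings -/

namespace BT

variable {α β : Type}

/-- Node labels in preorder. -/
def toList : BT α → List α
  | nil => []
  | node a l r => a :: (l.toList ++ r.toList)

/-- `t.Edge p c`: some node labelled `p` has a child labelled `c`. -/
def Edge : BT α → α → α → Prop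
  | nil, _, _ => False
  | node a l r, p, c =>
      (p = a ∧ (l.root = some c ∨ r.root = some c)) ∨ l.Edge p c ∨ r.Edge p c

theorem length_toList (t : BT α) : t.toList.length = t.size := by
  induction t with
  | nil => rfl
  | node a l r hl hr => simp [toList, size, hl, hr]

theorem toList_map (f : α → β) (t : BT α) : (t.map f).toList = t.toList.map f := by
  induction t with
  | nil => rfl
  | node a l r hl hr => simp [toList, map, hl, hr]

theorem mem_of_root {t : BT α} {a : α} (h : t.root = some a) : a ∈ t.toList := by
  cases t with
  | nil => simp [root] at h
  | node b l r =>
    simp only [root, Option.some.injEq] at h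
    simp [toList, h]

theorem root_map (f : α → β) (t : BT α) : (t.map f).root = t.root.map f := by
  cases t <;> rfl

theorem Edge.of_map {f : α → β} {t : BT α} {p c : β} (h : (t.map f).Edge p c) :
    ∃ p' c', t.Edge p' c' ∧ f p' = p ∧ f c' = c := by
  induction t with
  | nil => exact h.elim
  | node a l r hl hr =>
    rcases h with ⟨rfl, h | h⟩ | h | h
    · obtain ⟨c', e, rfl⟩ := Option.map_eq_some_iff.1 ((root_map f l).symm.trans h)
      exact ⟨a, c', Or.inl ⟨rfl, Or.inl e⟩, rfl, rfl⟩
    · obtain ⟨c', e, rfl⟩ := Option.map_eq_some_iff.1 ((root_map f r).symm.trans h)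
      exact ⟨a, c', Or.inl ⟨rfl, Or.inr e⟩, rfl, rfl⟩
    · obtain ⟨p', c', e, h1, h2⟩ := hl h
      exact ⟨p', c', Or.inr (Or.inl e), h1, h2⟩
    · obtain ⟨p', c', e, h1, h2⟩ := hr h
      exact ⟨p', c', Or.inr (Or.inr e), h1, h2⟩

end BT

section Extraction

open BT

variable {α : Type}

theorem rpos_of_root {d : BT (α × Pt)} {c : α × Pt} (h : d.root = some c) : rpos d = some c.2 := by
  simp [rpos, h]

theorem eseg_of_root {d : BT (α × Pt)} {c : α × Pt} (h : d.root = some c) (p : Pt) :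
    eseg p d = seg p c.2 := by
  ext x
  simp [eseg, rpos_of_root h]

theorem mem_foot_of_mem {d : BT (α × Pt)} {b : α × Pt} (h : b ∈ d.toList) : b.2 ∈ foot d := by
  induction d with
  | nil => simp [toList] at h
  | node a l r hl hr =>
    simp only [toList, List.mem_cons, List.mem_append] at h
    simp only [foot, Set.mem_union, Set.mem_singleton_iff]
    rcases h with rfl | h | h
    · simp
    · simp [hl h]
    · simp [hr h]

/-- Distinct nodes of a valid drawing have distinct positions. -/
theorem Valid.inj {d : BT (α × Pt)} (hd : Valid d) {b b' : α × Pt} (h : b ∈ d.toList)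
    (h' : b' ∈ d.toList) (e : b.2 = b'.2) : b = b' := by
  induction d with
  | nil => simp [toList] at h
  | node a l r hl hr =>
    obtain ⟨v1, v2, a1, a2, n1, n2, dj, c1, c2, c3, c4, c5⟩ := hd
    simp only [toList, List.mem_cons, List.mem_append] at h h'
    rcases h with rfl | h | h <;> rcases h' with rfl | h' | h'
    · rfl
    · exact absurd (mem_foot_of_mem h') (e ▸ n1)
    · exact absurd (mem_foot_of_mem h') (e ▸ n2)
    · exact absurd (mem_foot_of_mem h) (e ▸ n1)
    · exact hl v1 h h'
    · exact absurd (mem_foot_of_mem h') (e ▸ dj _ (mem_foot_of_mem h))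
    · exact absurd (mem_foot_of_mem h) (e ▸ n2)
    · exact absurd (mem_foot_of_mem h) (e ▸ dj _ (mem_foot_of_mem h'))
    · exact hr v2 h h'

theorem edge_mem {d : BT (α × Pt)} {p c : α × Pt} (h : d.Edge p c) :
    p ∈ d.toList ∧ c ∈ d.toList := by
  induction d with
  | nil => exact h.elim
  | node a l r hl hr =>
    simp only [toList, List.mem_cons, List.mem_append]
    rcases h with ⟨rfl, h | h⟩ | h | h
    · exact ⟨Or.inl rfl, Or.inr (Or.inl (mem_of_root h))⟩
    · exact ⟨Or.inl rfl, Or.inr (Or.inr (mem_of_root h))⟩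
    · exact ⟨Or.inr (Or.inl (hl h).1), Or.inr (Or.inl (hl h).2)⟩
    · exact ⟨Or.inr (Or.inr (hr h).1), Or.inr (Or.inr (hr h).2)⟩

theorem edge_aligned {d : BT (α × Pt)} (hd : Valid d) {p c : α × Pt} (h : d.Edge p c) :
    Aligned p.2 c.2 := by
  induction d with
  | nil => exact h.elim
  | node a l r hl hr =>
    obtain ⟨v1, v2, a1, a2, -⟩ := hd
    rcases h with ⟨rfl, h | h⟩ | h | h
    · exact a1 _ (rpos_of_root h)
    · exact a2 _ (rpos_of_root h)
    · exact hl v1 h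
    · exact hr v2 h

theorem edge_foot {d : BT (α × Pt)} {p c : α × Pt} (h : d.Edge p c) {x : Pt}
    (hx : x ∈ seg p.2 c.2) : x ∈ foot d := by
  induction d with
  | nil => exact h.elim
  | node a l r hl hr =>
    simp only [foot, Set.mem_union]
    rcases h with ⟨rfl, h | h⟩ | h | h
    · rw [← eseg_of_root h] at hx
      simp [hx]
    · rw [← eseg_of_root h] at hx
      simp [hx]
    · simp [hl h]
    · simp [hr h]

theorem edge_node {d : BT (α × Pt)} (hd : Valid d) {p c w : α × Pt} (h : d.Edge p c)
    (hw : w ∈ d.toList) (hx : w.2 ∈ seg p.2 c.2) : w = p ∨ w = c := by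
  induction d with
  | nil => exact h.elim
  | node a l r hl hr =>
    obtain ⟨v1, v2, a1, a2, n1, n2, dj, c1, c2, c3, c4, c5⟩ := hd
    simp only [toList, List.mem_cons, List.mem_append] at hw
    rcases h with ⟨rfl, h | h⟩ | h | h
    · rw [← eseg_of_root h] at hx
      rcases hw with rfl | hw | hw
      · exact Or.inl rfl
      · have := c1 _ hx (mem_foot_of_mem hw)
        rw [rpos_of_root h, Option.some.injEq] at this
        exact Or.inr (v1.inj (mem_of_root h) hw this).symm
      · exact absurd (mem_foot_of_mem hw) (c3 _ hx)
    · rw [← eseg_of_root h] at hx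
      rcases hw with rfl | hw | hw
      · exact Or.inl rfl
      · exact absurd (mem_foot_of_mem hw) (c4 _ hx)
      · have := c2 _ hx (mem_foot_of_mem hw)
        rw [rpos_of_root h, Option.some.injEq] at this
        exact Or.inr (v2.inj (mem_of_root h) hw this).symm
    · rcases hw with rfl | hw | hw
      · exact absurd (edge_foot h hx) n1
      · exact hl v1 h hw
      · exact absurd (mem_foot_of_mem hw) (dj _ (edge_foot h hx))
    · rcases hw with rfl | hw | hw
      · exact absurd (edge_foot h hx) n2
      · exact absurd (edge_foot h hx) (dj _ (mem_foot_of_mem hw))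
      · exact hr v2 h hw

/-- Distinct edges of a valid drawing share lattice points only at common endpoints. -/
theorem edge_edge {d : BT (α × Pt)} (hd : Valid d) {p c p' c' : α × Pt} (h : d.Edge p c)
    (h' : d.Edge p' c') {x : Pt} (hx : x ∈ seg p.2 c.2) (hx' : x ∈ seg p'.2 c'.2) :
    (p = p' ∧ c = c') ∨ ∃ w : α × Pt, x = w.2 ∧ (w = p ∨ w = c) ∧ (w = p' ∨ w = c') := by
  induction d with
  | nil => exact h.elim
  | node a l r hl hr =>
    obtain ⟨v1, v2, a1, a2, n1, n2, dj, c1, c2, c3, c4, c5⟩ := hd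
    -- an edge from the root to a child meets an edge below that child only in the child
    have down : ∀ (s : BT (α × Pt)) (c p' c' : α × Pt), Valid s → s.root = some c → s.Edge p' c' →
        (x ∈ foot s → rpos s = some x) → x ∈ seg p'.2 c'.2 → x = c.2 ∧ (c = p' ∨ c = c') := by
      intro s c p' c' vs hrt he hs hx
      have := hs (edge_foot he hx)
      rw [rpos_of_root hrt, Option.some.injEq] at this
      subst this
      exact ⟨rfl, edge_node vs he (mem_of_root hrt) hx⟩
    rcases h with ⟨rfl, h | h⟩ | h | h <;> rcases h' with ⟨rfl, h' | h'⟩ | h' | h'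
    · rw [h, Option.some.injEq] at h'
      exact Or.inl ⟨rfl, h'⟩
    · rw [← eseg_of_root h] at hx
      rw [← eseg_of_root h'] at hx'
      exact Or.inr ⟨p', c5 _ hx hx', Or.inl rfl, Or.inl rfl⟩
    · rw [← eseg_of_root h] at hx
      obtain ⟨e, k⟩ := down l c p' c' v1 h h' (c1 _ hx) hx'
      exact Or.inr ⟨c, e, Or.inr rfl, k⟩
    · rw [← eseg_of_root h] at hx
      exact absurd (edge_foot h' hx') (c3 _ hx)
    · rw [← eseg_of_root h] at hx
      rw [← eseg_of_root h'] at hx'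
      exact Or.inr ⟨p', c5 _ hx' hx, Or.inl rfl, Or.inl rfl⟩
    · rw [h, Option.some.injEq] at h'
      exact Or.inl ⟨rfl, h'⟩
    · rw [← eseg_of_root h] at hx
      exact absurd (edge_foot h' hx') (c4 _ hx)
    · rw [← eseg_of_root h] at hx
      obtain ⟨e, k⟩ := down r c p' c' v2 h h' (c2 _ hx) hx'
      exact Or.inr ⟨c, e, Or.inr rfl, k⟩
    · rw [← eseg_of_root h'] at hx'
      obtain ⟨e, k⟩ := down l c' p c v1 h' h (c1 _ hx') hx
      exact Or.inr ⟨c', e, k, Or.inr rfl⟩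
    · rw [← eseg_of_root h'] at hx'
      exact absurd (edge_foot h hx) (c4 _ hx')
    · exact hl v1 h h'
    · exact absurd (edge_foot h' hx') (dj _ (edge_foot h hx))
    · rw [← eseg_of_root h'] at hx'
      exact absurd (edge_foot h hx) (c3 _ hx')
    · rw [← eseg_of_root h'] at hx'
      obtain ⟨e, k⟩ := down r c' p c v2 h' h (c2 _ hx') hx
      exact Or.inr ⟨c', e, k, Or.inr rfl⟩
    · exact absurd (edge_foot h hx) (dj _ (edge_foot h' hx'))
    · exact hr v2 h h'

/-- The point of the plane represented by a lattice point, with `(0, 0)` moved to `(1, 1)`. -/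
noncomputable def toPlane (p : Pt) : ℝ × ℝ := ((p.1 + 1 : ℤ), (p.2 + 1 : ℤ))

theorem toPlane_inj {p q : Pt} (h : toPlane p = toPlane q) : p = q := by
  simp only [toPlane, Prod.mk.injEq, Int.cast_inj] at h
  ext <;> omega

/-- Rounding both coordinates of a point of a segment with integral endpoints, up or down, stays
in the bounding box of the segment. -/
theorem round_mem_seg {p q : Pt} {x : ℝ × ℝ} (h : x ∈ segment ℝ (toPlane p) (toPlane q)) :
    (⌊x.1⌋ - 1, ⌊x.2⌋ - 1) ∈ seg p q ∧ (⌈x.1⌉ - 1, ⌈x.2⌉ - 1) ∈ seg p q := by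
  have box : ∀ (a b : ℤ) (s t : ℝ), 0 ≤ s → 0 ≤ t → s + t = 1 →
      min a b ≤ ⌊s * a + t * b⌋ ∧ ⌊s * a + t * b⌋ ≤ max a b ∧
      min a b ≤ ⌈s * a + t * b⌉ ∧ ⌈s * a + t * b⌉ ≤ max a b := by
    intro a b s t hs ht hst
    have h1 : ((min a b : ℤ) : ℝ) ≤ s * a + t * b := by
      have e1 : ((min a b : ℤ) : ℝ) ≤ a := by exact_mod_cast min_le_left a b
      have e2 : ((min a b : ℤ) : ℝ) ≤ b := by exact_mod_cast min_le_right a b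
      generalize ((min a b : ℤ) : ℝ) = m at *
      obtain rfl : t = 1 - s := by linarith
      nlinarith
    have h2 : s * a + t * b ≤ ((max a b : ℤ) : ℝ) := by
      have e1 : (a : ℝ) ≤ ((max a b : ℤ) : ℝ) := by exact_mod_cast le_max_left a b
      have e2 : (b : ℝ) ≤ ((max a b : ℤ) : ℝ) := by exact_mod_cast le_max_right a b
      generalize ((max a b : ℤ) : ℝ) = m at *
      obtain rfl : t = 1 - s := by linarith
      nlinarith
    have h3 : min a b ≤ ⌊s * a + t * b⌋ := Int.le_floor.2 h1
    have h4 : ⌈s * a + t * b⌉ ≤ max a b := Int.ceil_le.2 h2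
    have h5 := Int.floor_le_ceil (s * (a : ℝ) + t * b)
    exact ⟨h3, h5.trans h4, h3.trans h5, h4⟩
  obtain ⟨s, t, hs, ht, hst, rfl⟩ := h
  have b1 := box (p.1 + 1) (q.1 + 1) s t hs ht hst
  have b2 := box (p.2 + 1) (q.2 + 1) s t hs ht hst
  simp only [toPlane, Prod.fst_add, Prod.snd_add, Prod.smul_fst, Prod.smul_snd, smul_eq_mul]
  simp only [seg, Set.mem_ofPred_eq]
  omega

theorem toPlane_round {x : ℝ × ℝ} {p : Pt} (h1 : (⌊x.1⌋ - 1, ⌊x.2⌋ - 1) = p)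
    (h2 : (⌈x.1⌉ - 1, ⌈x.2⌉ - 1) = p) : x = toPlane p := by
  subst h1
  simp only [Prod.mk.injEq] at h2
  have e1 := Int.floor_le x.1
  have e2 := Int.le_ceil x.1
  have e3 := Int.floor_le x.2
  have e4 := Int.le_ceil x.2
  rw [show ⌈x.1⌉ = ⌊x.1⌋ by omega] at e2
  rw [show ⌈x.2⌉ = ⌊x.2⌋ by omega] at e4
  simp only [toPlane, sub_add_cancel]
  exact Prod.ext (le_antisymm e2 e1) (le_antisymm e4 e3)

/-- A drawn binary tree containing every edge of `G` yields a drawing of `G`. -/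
theorem gridDrawing_of_treeDraw {V : Type} (G : SimpleGraph V) {t : BT V} {W H : ℕ}
    (hT : TreeDraw t W H) (nd : t.toList.Nodup) (mem : ∀ v, v ∈ t.toList)
    (adj : ∀ u v, G.Adj u v → t.Edge u v ∨ t.Edge v u) :
    ∃ f : V → ℝ × ℝ, IsGridDrawing G f W H ∧ IsOrthogonal G f := by
  obtain ⟨d, rfl, hd, -, hbox⟩ := hT
  rw [toList_map] at nd
  simp only [toList_map, List.mem_map] at mem
  choose g g1 g2 using mem
  have gu : ∀ b ∈ d.toList, b = g b.1 := fun b hb =>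
    List.inj_on_of_nodup_map nd hb (g1 _) (g2 _).symm
  have ginj : Function.Injective g := fun u v h => by rw [← g2 u, h, g2]
  have gadj : ∀ u v, G.Adj u v → d.Edge (g u) (g v) ∨ d.Edge (g v) (g u) := by
    have : ∀ u v, (d.map Prod.fst).Edge u v → d.Edge (g u) (g v) := by
      intro u v h
      obtain ⟨p, c, e, rfl, rfl⟩ := h.of_map
      rwa [← gu p (edge_mem e).1, ← gu c (edge_mem e).2]
    intro u v h
    exact (adj u v h).imp (this u v) (this v u)
  have seg_comm : ∀ p q : Pt, seg p q = seg q p := by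
    intro p q
    simp only [seg, min_comm, max_comm]
  -- the two facts about edges, for unordered edges of `G`
  have key1 : ∀ u v w, G.Adj u v → (g w).2 ∈ seg (g u).2 (g v).2 → w = u ∨ w = v := by
    intro u v w h hx
    rcases gadj u v h with e | e
    · exact (edge_node hd e (g1 w) hx).imp (fun h => ginj h) (fun h => ginj h)
    · rw [seg_comm] at hx
      exact (edge_node hd e (g1 w) hx).symm.imp (fun h => ginj h) (fun h => ginj h)
  have key2 : ∀ u v u' v', G.Adj u v → G.Adj u' v' → s(u, v) ≠ s(u', v') → ∀ x,
      x ∈ seg (g u).2 (g v).2 → x ∈ seg (g u').2 (g v').2 →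
      ∃ w, x = (g w).2 ∧ (w = u ∨ w = v) ∧ (w = u' ∨ w = v') := by
    have aux : ∀ u v u' v', d.Edge (g u) (g v) → d.Edge (g u') (g v') → s(u, v) ≠ s(u', v') →
        ∀ x, x ∈ seg (g u).2 (g v).2 → x ∈ seg (g u').2 (g v').2 →
        ∃ w, x = (g w).2 ∧ (w = u ∨ w = v) ∧ (w = u' ∨ w = v') := by
      intro u v u' v' h h' hne x hx hx'
      rcases edge_edge hd h h' hx hx' with ⟨e1, e2⟩ | ⟨w, e, h1, h2⟩
      · exact absurd (by rw [ginj e1, ginj e2]) hne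
      · obtain ⟨w, rfl⟩ : ∃ w', w = g w' := by
          rcases h1 with rfl | rfl
          exacts [⟨u, rfl⟩, ⟨v, rfl⟩]
        exact ⟨w, e, h1.imp (fun h => ginj h) (fun h => ginj h),
          h2.imp (fun h => ginj h) (fun h => ginj h)⟩
    intro u v u' v' h h' hne x hx hx'
    rcases gadj u v h with e | e <;> rcases gadj u' v' h' with e' | e'
    · exact aux u v u' v' e e' hne x hx hx'
    · rw [seg_comm] at hx'
      obtain ⟨w, k0, k1, k2⟩ := aux u v v' u' e e' (by rwa [Sym2.eq_swap (a := v')]) x hx hx'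
      exact ⟨w, k0, k1, k2.symm⟩
    · rw [seg_comm] at hx
      obtain ⟨w, k0, k1, k2⟩ := aux v u u' v' e e' (by rwa [Sym2.eq_swap (a := v)]) x hx hx'
      exact ⟨w, k0, k1.symm, k2⟩
    · rw [seg_comm] at hx hx'
      obtain ⟨w, k0, k1, k2⟩ := aux v u v' u' e e'
        (by rwa [Sym2.eq_swap (a := v), Sym2.eq_swap (a := v')]) x hx hx'
      exact ⟨w, k0, k1.symm, k2.symm⟩
  have round : ∀ w, ((⌊(toPlane (g w).2).1⌋ - 1, ⌊(toPlane (g w).2).2⌋ - 1) : Pt) = (g w).2 := by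
    intro w
    simp [toPlane]
  refine ⟨fun v => toPlane (g v).2, ⟨⟨?_, ?_, ?_⟩, ?_⟩, ?_⟩
  · intro u v h
    exact ginj (hd.inj (g1 u) (g1 v) (toPlane_inj h))
  · intro u v w h hu hv hx
    have := (round_mem_seg hx).1
    rw [round] at this
    rcases key1 u v w h this with rfl | rfl
    · exact hu rfl
    · exact hv rfl
  · intro u v u' v' h h' hne
    ext x
    constructor
    · rintro ⟨hx, hx'⟩
      obtain ⟨r1, r2⟩ := round_mem_seg hx
      obtain ⟨r1', r2'⟩ := round_mem_seg hx'
      obtain ⟨w, e, k1, k2⟩ := key2 u v u' v' h h' hne _ r1 r1'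
      obtain ⟨z, e', k1', k2'⟩ := key2 u v u' v' h h' hne _ r2 r2'
      -- two different common endpoints would make the edges equal
      have hwz : w = z := by
        by_contra hwz
        refine hne ?_
        rw [Sym2.eq_iff]
        grind
      subst hwz
      exact ⟨w, ⟨k1, k2⟩, (toPlane_round e e').symm⟩
    · rintro ⟨w, ⟨h1, h2⟩, rfl⟩
      constructor
      · rcases h1 with rfl | rfl
        exacts [left_mem_segment _ _ _, right_mem_segment _ _ _]
      · rcases h2 with rfl | rfl
        exacts [left_mem_segment _ _ _, right_mem_segment _ _ _]
  · intro v
    have := hbox (g v).2.1 (g v).2.2 (mem_foot_of_mem (g1 v))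
    exact ⟨(g v).2.1 + 1, (g v).2.2 + 1, by omega, by omega, by omega, by omega, rfl⟩
  · intro u v h
    have : Aligned (g u).2 (g v).2 := by
      rcases gadj u v h with e | e
      · exact edge_aligned hd e
      · exact (edge_aligned hd e).imp Eq.symm Eq.symm
    exact this.imp (fun h => by simp [toPlane, h]) (fun h => by simp [toPlane, h])

end Extraction

/-! ### From rooted graphs to right-heavy binary trees -/

section Rooted

open BT

variable {V : Type}

theorem IsParent.unique {G : SimpleGraph V} (hG : G.IsTree) {r p p' u : V}
    (h : IsParent G r p u) (h' : IsParent G r p' u) : p = p' := by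
  obtain ⟨w, hw⟩ := hG.connected.exists_walk_length_eq_dist r p
  obtain ⟨w', hw'⟩ := hG.connected.exists_walk_length_eq_dist r p'
  have e : (w.concat h.1).IsPath :=
    Walk.isPath_of_length_eq_dist _ (by rw [Walk.length_concat, hw, h.2])
  have e' : (w'.concat h'.1).IsPath :=
    Walk.isPath_of_length_eq_dist _ (by rw [Walk.length_concat, hw', h'.2])
  have := congrArg Subtype.val
    ((hG.isAcyclic.subsingleton_path r u).elim ⟨_, e⟩ ⟨_, e'⟩)
  have := congrArg Walk.penultimate this
  simpa using this

theorem IsParent.dist_le {G : SimpleGraph V} {r a u : V}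
    (h : Relation.ReflTransGen (IsParent G r) a u) : a = u ∨ G.dist r a < G.dist r u := by
  induction h with
  | refl => exact Or.inl rfl
  | tail _ h ih =>
    have := h.2
    rcases ih with rfl | ih <;> right <;> omega

theorem IsParent.anc_unique {G : SimpleGraph V} (hG : G.IsTree) {r a b u : V}
    (h : Relation.ReflTransGen (IsParent G r) a u) (h' : Relation.ReflTransGen (IsParent G r) b u)
    (e : G.dist r a = G.dist r b) : a = b := by
  induction h with
  | refl =>
    rcases IsParent.dist_le h' with k | k
    · exact k.symm
    · omega
  | tail h1 h2 ih =>
    rcases Relation.ReflTransGen.cases_tail h' with k | ⟨c, k1, k2⟩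
    · subst k
      rcases IsParent.dist_le (h1.tail h2) with k | k
      · exact k
      · omega
    · obtain rfl := IsParent.unique hG h2 k2
      exact ih k1

theorem IsParent.of_root {G : SimpleGraph V} (hG : G.IsTree) (r u : V) :
    Relation.ReflTransGen (IsParent G r) r u := by
  obtain ⟨w⟩ := hG.connected r u
  have : ∀ a b (_ : G.Walk a b), Relation.ReflTransGen (IsParent G r) r a →
      Relation.ReflTransGen (IsParent G r) r b := by
    intro a b w
    induction w with
    | nil => exact id
    | @cons a c b h _ ih =>
      intro ha
      refine ih ?_
      rcases hG.dist_eq_dist_add_one_of_adj r h with e | e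
      · rcases Relation.ReflTransGen.cases_tail ha with k | ⟨p, k1, k2⟩
        · subst k
          simp at e
        · rwa [IsParent.unique hG (⟨h.symm, e.symm⟩ : IsParent G r c a) k2]
      · exact ha.tail ⟨h, e.symm⟩
  exact this r u w .refl

/-- `t` is the subtree of descendants of `v`, with the children at every node ordered so that it
is right-heavy. -/
structure Subtree (G : SimpleGraph V) (r v : V) (t : BT V) : Prop where
  root : t.root = some v
  rh : t.RH
  nodup : t.toList.Nodup
  mem : ∀ u, u ∈ t.toList ↔ Relation.ReflTransGen (IsParent G r) v u
  edge : ∀ u ∈ t.toList, ∀ w, IsParent G r u w → t.Edge u w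

theorem exists_subtree [Fintype V] {G : SimpleGraph V} (hG : G.IsTree) (r : V)
    (h2 : ∀ u : V, {v : V | IsParent G r u v}.ncard ≤ 2) (M : ℕ) (hM : ∀ v, G.dist r v ≤ M)
    (m : ℕ) : ∀ v, M < G.dist r v + m → ∃ t, Subtree G r v t := by
  induction m with
  | zero => intro v h; have := hM v; omega
  | succ m ih =>
    intro v hv
    -- the children of `v` become the roots of two possibly empty trees
    have main : ∃ l t : BT V, l.size ≤ t.size ∧ l.RH ∧ t.RH ∧ (v :: (l.toList ++ t.toList)).Nodup ∧
        (∀ w, IsParent G r v w ↔ l.root = some w ∨ t.root = some w) ∧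
        (∀ w, l.root = some w → Subtree G r w l) ∧ (∀ w, t.root = some w → Subtree G r w t) := by
      have hvn : ∀ c t, IsParent G r v c → Subtree G r c t → v ∉ t.toList := by
        intro c t h hs hm
        have e := h.2
        rcases IsParent.dist_le ((hs.mem v).1 hm) with k | k
        · subst k; omega
        · omega
      have hc : ∀ c, IsParent G r v c → ∃ t, Subtree G r c t := fun c h =>
        ih c (by have := h.2; omega)
      have hfin : {w : V | IsParent G r v w}.Finite := Set.toFinite _
      have h2v := h2 v
      obtain h0 | h1 | h2 : {w : V | IsParent G r v w}.ncard = 0 ∨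
        {w : V | IsParent G r v w}.ncard = 1 ∨ {w : V | IsParent G r v w}.ncard = 2 := by omega
      · rw [Set.ncard_eq_zero hfin] at h0
        refine ⟨.nil, .nil, le_rfl, trivial, trivial, by simp [toList], fun w => ?_,
          by simp [BT.root], by simp [BT.root]⟩
        have : w ∉ {w : V | IsParent G r v w} := by simp [h0]
        simpa [BT.root] using this
      · obtain ⟨c, h1⟩ := Set.ncard_eq_one.1 h1
        have hcm : ∀ w, IsParent G r v w ↔ w = c := fun w => by
          have : w ∈ {w : V | IsParent G r v w} ↔ w ∈ ({c} : Set V) := by rw [h1]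
          simpa using this
        have hvc := (hcm c).2 rfl
        obtain ⟨t, ht⟩ := hc c hvc
        refine ⟨.nil, t, Nat.zero_le _, trivial, ht.rh, ?_, fun w => ?_, by simp [BT.root], fun w hw => ?_⟩
        · simpa [toList] using ⟨hvn c t hvc ht, ht.nodup⟩
        · rw [hcm, ht.root]
          simp [BT.root, eq_comm]
        · rw [ht.root, Option.some.injEq] at hw
          exact hw ▸ ht
      · obtain ⟨a, b, hab, h2⟩ := Set.ncard_eq_two.1 h2
        have hcm : ∀ w, IsParent G r v w ↔ w = a ∨ w = b := fun w => by
          have : w ∈ {w : V | IsParent G r v w} ↔ w ∈ ({a, b} : Set V) := by rw [h2]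
          simpa using this
        obtain ⟨s, hs⟩ := hc a ((hcm a).2 (Or.inl rfl))
        obtain ⟨t, ht⟩ := hc b ((hcm b).2 (Or.inr rfl))
        clear h2
        wlog hst : s.size ≤ t.size generalizing a b s t
        · exact this b a hab.symm (fun w => by rw [hcm, or_comm]) t ht s hs (by omega)
        have va := (hcm a).2 (Or.inl rfl)
        have vb := (hcm b).2 (Or.inr rfl)
        refine ⟨s, t, hst, hs.rh, ht.rh, ?_, fun w => ?_, fun w hw => ?_, fun w hw => ?_⟩
        · rw [List.nodup_cons, List.mem_append, not_or, List.nodup_append]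
          refine ⟨⟨hvn a s va hs, hvn b t vb ht⟩, hs.nodup, ht.nodup, ?_⟩
          rintro u hu _ hu' rfl
          exact hab (IsParent.anc_unique hG ((hs.mem u).1 hu) ((ht.mem u).1 hu')
            (va.2.symm.trans vb.2))
        · rw [hcm, hs.root, ht.root]
          simp [eq_comm]
        · rw [hs.root, Option.some.injEq] at hw
          exact hw ▸ hs
        · rw [ht.root, Option.some.injEq] at hw
          exact hw ▸ ht
    obtain ⟨l, t, lt, l1, t1, nd, ch, l2, t2⟩ := main
    have ex : ∀ (s : BT V) u, u ∈ s.toList → ∃ w, s.root = some w := by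
      intro s u h
      cases s with
      | nil => simp [toList] at h
      | node a _ _ => exact ⟨a, rfl⟩
    refine ⟨.node v l t, rfl, ⟨lt, l1, t1⟩, nd, fun u => ?_, fun u hu w hw => ?_⟩
    · simp only [toList, List.mem_cons, List.mem_append]
      constructor
      · rintro (rfl | h | h)
        · exact .refl
        · obtain ⟨w, hw⟩ := ex l u h
          exact .head ((ch w).2 (Or.inl hw)) (((l2 w hw).mem u).1 h)
        · obtain ⟨w, hw⟩ := ex t u h
          exact .head ((ch w).2 (Or.inr hw)) (((t2 w hw).mem u).1 h)
      · intro h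
        rcases Relation.ReflTransGen.cases_head h with k | ⟨c, k1, k2⟩
        · exact Or.inl k.symm
        · rcases (ch c).1 k1 with e | e
          · exact Or.inr (Or.inl (((l2 c e).mem u).2 k2))
          · exact Or.inr (Or.inr (((t2 c e).mem u).2 k2))
    · simp only [toList, List.mem_cons, List.mem_append] at hu
      rcases hu with rfl | h | h
      · exact Or.inl ⟨rfl, (ch w).1 hw⟩
      · obtain ⟨c, hc⟩ := ex l u h
        exact Or.inr (Or.inl ((l2 c hc).edge u h w hw))
      · obtain ⟨c, hc⟩ := ex t u h
        exact Or.inr (Or.inr ((t2 c hc).edge u h w hw))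

/-- A rooted binary tree as a right-heavy `BT`. -/
theorem exists_bt [Fintype V] {G : SimpleGraph V} (hG : G.IsTree) (r : V)
    (h2 : ∀ u : V, {v : V | IsParent G r u v}.ncard ≤ 2) :
    ∃ t : BT V, t.RH ∧ t.size = Fintype.card V ∧ t.toList.Nodup ∧ (∀ v, v ∈ t.toList) ∧
      ∀ u v, G.Adj u v → t.Edge u v ∨ t.Edge v u := by
  classical
  obtain ⟨t, ht⟩ := exists_subtree hG r h2 (Finset.univ.sup (G.dist r))
    (fun v => Finset.le_sup (Finset.mem_univ v)) (Finset.univ.sup (G.dist r) + 1) r (by omega)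
  have hm : ∀ v, v ∈ t.toList := fun v => (ht.mem v).2 (IsParent.of_root hG r v)
  refine ⟨t, ht.rh, ?_, ht.nodup, hm, fun u v h => ?_⟩
  · rw [← length_toList, ← List.toFinset_card_of_nodup ht.nodup, ← Finset.card_univ]
    congr 1
    ext v
    simp [hm v]
  · rcases hG.dist_eq_dist_add_one_of_adj r h with e | e
    · exact Or.inr (ht.edge v (hm v) u ⟨h.symm, e.symm⟩)
    · exact Or.inl (ht.edge u (hm u) v ⟨h, e.symm⟩)

end Rooted

/-- Width–height tradeoff: for `log n ≤ Ã ≤ n/log n`, every binary tree of size `n` has a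
straight-line orthogonal grid drawing of width `O(Ã)` and height `(n/Ã)·2^{O(log* Ã)}`. -/
theorem stmt13 : ∃ C : ℝ, 0 < C ∧
    ∀ (n At : ℕ), 16 ≤ n → Real.logb 2 n ≤ (At : ℝ) →
      (At : ℝ) ≤ (n : ℝ) / Real.logb 2 n →
    ∀ (V : Type) [Fintype V] (G : SimpleGraph V), G.IsTree → Fintype.card V = n →
    ∀ r : V, (∀ u : V, {v : V | IsParent G r u v}.ncard ≤ 2) →
    ∃ (W H : ℕ) (f : V → ℝ × ℝ), IsGridDrawing G f W H ∧ IsOrthogonal G f ∧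
      (W : ℝ) ≤ C * At ∧
      (H : ℝ) ≤ ((n : ℝ) / At) * (2 : ℝ) ^ (C * (logStar At : ℝ)) := by
  refine ⟨35, by norm_num, ?_⟩
  intro n At hn h1 h2 V _ G hG hcard r hbin
  obtain ⟨t, rh, hs, nd, mem, adj⟩ := exists_bt hG r hbin
  obtain ⟨W, H, hT, hW, hH⟩ := treeDraw_tradeoff n At hn h1 h2 t rh (hs.trans hcard)
  obtain ⟨f, hf, ho⟩ := gridDrawing_of_treeDraw G hT nd mem adj
  exact ⟨W, H, f, hf, ho, hW, hH⟩
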